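/- Example 1, second channel (Coding scheme 2 beats Coding scheme 1): Consider the binary SD-MAWC with X1 = X2 = S-alphabet = Y-alphabet = Z-alphabet = {0,1}, S ~ Bernoulli(p) i.i.d., legitimate output Y = X1 XOR X2 XOR S, and eavesdropper output Z = X2. If 1 - h(p) >= h(p), then the rate pair (0, h(p)) belongs to R_2 (achievable by Coding scheme 2), whereas (0, h(p)) does not belong to R_1: for every admissible joint law one has I(U2;Z|S,U) >= I(U2;Y|S,U,U1) >= I(U2;Y|V,U,U1) (so R_1 reduces to its subregion R_{13}), and there R2 <= I(V;Y) <= h(p) with equality possible only in a configuration forcing R2 = 0; hence every point (0,R2) in R_1 has R2 < h(p). -/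

import Mathlib

/-!
Coding scheme 2 reaches `(0, h(p))` on the state key alone: with `X₁` constant and `X₂ = U₂`
uniform, the decoder recovers `S` from `Y` and `U₂`, so that a key of rate `H(S|Z,U₂) = h(p)` is
available. It hides a message of rate `h(p)`, which the legitimate channel can carry since
`I(U₂;Y) = 1 - h(p) ≥ h(p)`.

In Coding scheme 1 the eavesdropper sees `X₂` itself, which, given `(S, U)`, is independent of the
first sender; hence `I(U₂;Y|S,U,U₁) ≤ I(U₂;Z|S,U)`, wiretap coding gains nothing, and `R₂` is
bounded both by `I(V;Y)` and by `I(U₂;Y|V,U,U₁)`. Since `V → S → Y` is a Markov chain,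
`h(p) = I(V;Y) + I(V;S|Y) + H(S|V)`. If `R₂` reached `h(p)`, the last two terms would vanish,
so `V` and `Y` would both determine `S`; as `Y` takes no more values than `S`, it would be a
function of `S`, hence of `V`, forcing `I(U₂;Y|V,U,U₁) = 0` and `R₂ = 0`. The strict inequality
defines a half-plane, so it survives the convex hull.
-/

open scoped BigOperators

noncomputable section

namespace Paper

/-- `p` is a probability mass function on the finite type `α`. -/
def IsPmf {α : Type*} [Fintype α] (p : α → ℝ) : Prop :=
  (∀ a, 0 ≤ p a) ∧ ∑ a, p a = 1

/-- `k` is a conditional pmf (a channel / stochastic kernel). -/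
def IsKernel {α β : Type*} [Fintype β] (k : α → β → ℝ) : Prop :=
  ∀ a, IsPmf (k a)

/-- Shannon entropy (base 2) of a mass function on a finite type. -/
def ent {α : Type*} [Fintype α] (p : α → ℝ) : ℝ :=
  -∑ a, p a * Real.logb 2 (p a)

/-- Law (pushforward) of the random variable `X` under the mass function `p`. -/
def law {Ω α : Type*} [Fintype Ω] [DecidableEq α] (p : Ω → ℝ) (X : Ω → α) :
    α → ℝ := fun a => ∑ ω, if X ω = a then p ω else 0

/-- Entropy `H(X)` of a random variable `X`. -/
def H {Ω α : Type*} [Fintype Ω] [Fintype α] [DecidableEq α] (p : Ω → ℝ)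
    (X : Ω → α) : ℝ := ent (law p X)

/-- Conditional entropy `H(X|Y)`. -/
def Hc {Ω α β : Type*} [Fintype Ω] [Fintype α] [Fintype β] [DecidableEq α]
    [DecidableEq β] (p : Ω → ℝ) (X : Ω → α) (Y : Ω → β) : ℝ :=
  H p (fun ω => (X ω, Y ω)) - H p Y

/-- Mutual information `I(X;Y)`. -/
def MI {Ω α β : Type*} [Fintype Ω] [Fintype α] [Fintype β] [DecidableEq α]
    [DecidableEq β] (p : Ω → ℝ) (X : Ω → α) (Y : Ω → β) : ℝ :=
  H p X + H p Y - H p (fun ω => (X ω, Y ω))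

/-- Conditional mutual information `I(X;Y|Z)`. -/
def cMI {Ω α β γ : Type*} [Fintype Ω] [Fintype α] [Fintype β] [Fintype γ]
    [DecidableEq α] [DecidableEq β] [DecidableEq γ] (p : Ω → ℝ) (X : Ω → α)
    (Y : Ω → β) (Z : Ω → γ) : ℝ :=
  Hc p X Z - Hc p X (fun ω => (Y ω, Z ω))

/-- Kullback–Leibler divergence (base 2). -/
def KL {α : Type*} [Fintype α] (p q : α → ℝ) : ℝ :=
  ∑ a, p a * Real.logb 2 (p a / q a)

/-- Binary entropy function. -/
def hb (x : ℝ) : ℝ := -(x * Real.logb 2 x) - (1 - x) * Real.logb 2 (1 - x)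

/-- A (message-indexed) encoder is causal: its `j`-th output symbol depends only on the
first `j` state symbols. -/
def Causal {M A B : Type*} {n : ℕ} (e : M → (Fin n → A) → Fin n → B) : Prop :=
  ∀ m s s' j, (∀ i, i ≤ j → s i = s' i) → e m s j = e m s' j

/-- A strictly causal encoder: its `j`-th output symbol depends only on the state symbols
strictly before `j`. -/
def StrictlyCausal {M A B : Type*} {n : ℕ} (e : M → (Fin n → A) → Fin n → B) : Prop :=
  ∀ m s s' j, (∀ i, i < j → s i = s' i) → e m s j = e m s' j

/-- A length-`n` two-sender code with message sets `Fin m1`, `Fin m2`: encoders map a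
message and the state sequence to a channel-input sequence, and the decoder maps the
channel output sequence to a message pair. -/
structure Code2 (A1 A2 AS AY AZ : Type) (n m1 m2 : ℕ) where
  enc1 : Fin m1 → (Fin n → AS) → Fin n → A1
  enc2 : Fin m2 → (Fin n → AS) → Fin n → A2
  dec : (Fin n → AY) → Fin m1 × Fin m2

/-- Sample space carrying the auxiliary random variables `(V,U,U1,U2,X1,X2,S,Y,Z)`. -/
abbrev O9 (V U U1 U2 A1 A2 AS AY AZ : Type) : Type :=
  V × U × U1 × U2 × A1 × A2 × AS × AY × AZ

namespace O9
variable {V U U1 U2 A1 A2 AS AY AZ : Type}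
def v (ω : O9 V U U1 U2 A1 A2 AS AY AZ) : V := ω.1
def u (ω : O9 V U U1 U2 A1 A2 AS AY AZ) : U := ω.2.1
def u1 (ω : O9 V U U1 U2 A1 A2 AS AY AZ) : U1 := ω.2.2.1
def u2 (ω : O9 V U U1 U2 A1 A2 AS AY AZ) : U2 := ω.2.2.2.1
def x1 (ω : O9 V U U1 U2 A1 A2 AS AY AZ) : A1 := ω.2.2.2.2.1
def x2 (ω : O9 V U U1 U2 A1 A2 AS AY AZ) : A2 := ω.2.2.2.2.2.1
def s (ω : O9 V U U1 U2 A1 A2 AS AY AZ) : AS := ω.2.2.2.2.2.2.1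
def y (ω : O9 V U U1 U2 A1 A2 AS AY AZ) : AY := ω.2.2.2.2.2.2.2.1
def z (ω : O9 V U U1 U2 A1 A2 AS AY AZ) : AZ := ω.2.2.2.2.2.2.2.2
end O9

/-- Sample space carrying the auxiliary random variables `(U1,U2,X1,X2,S,Y,Z)`. -/
abbrev O7 (U1 U2 A1 A2 AS AY AZ : Type) : Type :=
  U1 × U2 × A1 × A2 × AS × AY × AZ

namespace O7
variable {U1 U2 A1 A2 AS AY AZ : Type}
def u1 (ω : O7 U1 U2 A1 A2 AS AY AZ) : U1 := ω.1
def u2 (ω : O7 U1 U2 A1 A2 AS AY AZ) : U2 := ω.2.1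
def x1 (ω : O7 U1 U2 A1 A2 AS AY AZ) : A1 := ω.2.2.1
def x2 (ω : O7 U1 U2 A1 A2 AS AY AZ) : A2 := ω.2.2.2.1
def s (ω : O7 U1 U2 A1 A2 AS AY AZ) : AS := ω.2.2.2.2.1
def y (ω : O7 U1 U2 A1 A2 AS AY AZ) : AY := ω.2.2.2.2.2.1
def z (ω : O7 U1 U2 A1 A2 AS AY AZ) : AZ := ω.2.2.2.2.2.2
end O7

/-- An auxiliary joint law `P_S P_{V|S} P_U P_{U1|U} P_{U2|U} P_{X1|UU1S} P_{X2|UU2S}`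
over arbitrary finite auxiliary alphabets. -/
structure AuxLawR1 (A1 A2 AS AY AZ : Type) [Fintype A1] [Fintype A2] [Fintype AS]
    [Fintype AY] [Fintype AZ] where
  V : Type
  U : Type
  U1 : Type
  U2 : Type
  [fV : Fintype V]
  [fU : Fintype U]
  [fU1 : Fintype U1]
  [fU2 : Fintype U2]
  [dV : DecidableEq V]
  [dU : DecidableEq U]
  [dU1 : DecidableEq U1]
  [dU2 : DecidableEq U2]
  PV : AS → V → ℝ
  PU : U → ℝ
  PU1 : U → U1 → ℝ
  PU2 : U → U2 → ℝ
  PX1 : U → U1 → AS → A1 → ℝ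
  PX2 : U → U2 → AS → A2 → ℝ
  hPV : IsKernel PV
  hPU : IsPmf PU
  hPU1 : IsKernel PU1
  hPU2 : IsKernel PU2
  hPX1 : ∀ u u1 s, IsPmf (PX1 u u1 s)
  hPX2 : ∀ u u2 s, IsPmf (PX2 u u2 s)

attribute [instance] AuxLawR1.fV AuxLawR1.fU AuxLawR1.fU1 AuxLawR1.fU2
  AuxLawR1.dV AuxLawR1.dU AuxLawR1.dU1 AuxLawR1.dU2

/-- An auxiliary joint law `P_S P_{U1} P_{U2} P_{X1|U1S} P_{X2|U2S}` over arbitrary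
finite auxiliary alphabets (for Coding scheme 2). -/
structure AuxLawR2 (A1 A2 AS AY AZ : Type) [Fintype A1] [Fintype A2] [Fintype AS]
    [Fintype AY] [Fintype AZ] where
  U1 : Type
  U2 : Type
  [fU1 : Fintype U1]
  [fU2 : Fintype U2]
  [dU1 : DecidableEq U1]
  [dU2 : DecidableEq U2]
  PU1 : U1 → ℝ
  PU2 : U2 → ℝ
  PX1 : U1 → AS → A1 → ℝ
  PX2 : U2 → AS → A2 → ℝ
  hPU1 : IsPmf PU1
  hPU2 : IsPmf PU2
  hPX1 : ∀ u1 s, IsPmf (PX1 u1 s)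
  hPX2 : ∀ u2 s, IsPmf (PX2 u2 s)

attribute [instance] AuxLawR2.fU1 AuxLawR2.fU2 AuxLawR2.dU1 AuxLawR2.dU2

variable {A1 A2 AS AY AZ : Type} [Fintype A1] [Fintype A2] [Fintype AS]
  [Fintype AY] [Fintype AZ] [DecidableEq A1] [DecidableEq A2] [DecidableEq AS]
  [DecidableEq AY] [DecidableEq AZ]

/-- Joint distribution of (uniform independent) messages, the i.i.d. state sequence and
the memoryless channel outputs, induced by a code. -/
def jp2 (PS : AS → ℝ) (W : A1 → A2 → AS → AY × AZ → ℝ) {n m1 m2 : ℕ}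
    (c : Code2 A1 A2 AS AY AZ n m1 m2) :
    Fin m1 × Fin m2 × (Fin n → AS) × (Fin n → AY) × (Fin n → AZ) → ℝ :=
  fun ω =>
    (m1 : ℝ)⁻¹ * (m2 : ℝ)⁻¹ * (∏ i, PS (ω.2.2.1 i)) *
      ∏ i, W (c.enc1 ω.1 ω.2.2.1 i) (c.enc2 ω.2.1 ω.2.2.1 i) (ω.2.2.1 i)
        (ω.2.2.2.1 i, ω.2.2.2.2 i)

/-- Average probability of a decoding error. -/
def Perr2 (PS : AS → ℝ) (W : A1 → A2 → AS → AY × AZ → ℝ) {n m1 m2 : ℕ}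
    (c : Code2 A1 A2 AS AY AZ n m1 m2) : ℝ :=
  ∑ ω, if c.dec ω.2.2.2.1 = (ω.1, ω.2.1) then 0 else jp2 PS W c ω

/-- Information leakage `I(M1,M2; Z^n)` to the eavesdropper. -/
def Leak2 (PS : AS → ℝ) (W : A1 → A2 → AS → AY × AZ → ℝ) {n m1 m2 : ℕ}
    (c : Code2 A1 A2 AS AY AZ n m1 m2) : ℝ :=
  MI (jp2 PS W c) (fun ω => (ω.1, ω.2.1)) (fun ω => ω.2.2.2.2)

/-- `(R1,R2)` is achievable with causal CSI at both encoders under the strong secrecy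
criterion. -/
def AchievableCSI (PS : AS → ℝ) (W : A1 → A2 → AS → AY × AZ → ℝ) (R : ℝ × ℝ) : Prop :=
  0 ≤ R.1 ∧ 0 ≤ R.2 ∧
    ∀ ε : ℝ, 0 < ε → ∃ n0 : ℕ, ∀ n : ℕ, n0 < n →
      ∃ c : Code2 A1 A2 AS AY AZ n ⌈(2 : ℝ) ^ ((n : ℝ) * R.1)⌉₊ ⌈(2 : ℝ) ^ ((n : ℝ) * R.2)⌉₊,
        Causal c.enc1 ∧ Causal c.enc2 ∧ Perr2 PS W c ≤ ε ∧ Leak2 PS W c ≤ ε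

/-- The strong-secrecy capacity region `C^{CSI-E}` (closure of the achievable pairs). -/
def CapCSIE (PS : AS → ℝ) (W : A1 → A2 → AS → AY × AZ → ℝ) : Set (ℝ × ℝ) :=
  closure {R | AchievableCSI PS W R}

section AuxR1
variable {V U U1 U2 : Type} [Fintype V] [Fintype U] [Fintype U1] [Fintype U2]
  [DecidableEq V] [DecidableEq U] [DecidableEq U1] [DecidableEq U2]

/-- The joint pmf `P_S P_{V|S} P_U P_{U1|U} P_{U2|U} P_{X1|UU1S} P_{X2|UU2S} W`. -/
def jointR1 (PS : AS → ℝ) (W : A1 → A2 → AS → AY × AZ → ℝ) (PV : AS → V → ℝ)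
    (PU : U → ℝ) (PU1 : U → U1 → ℝ) (PU2 : U → U2 → ℝ)
    (PX1 : U → U1 → AS → A1 → ℝ) (PX2 : U → U2 → AS → A2 → ℝ) :
    O9 V U U1 U2 A1 A2 AS AY AZ → ℝ :=
  fun ω => PS ω.s * PV ω.s ω.v * PU ω.u * PU1 ω.u ω.u1 * PU2 ω.u ω.u2 *
    PX1 ω.u ω.u1 ω.s ω.x1 * PX2 ω.u ω.u2 ω.s ω.x2 * W ω.x1 ω.x2 ω.s (ω.y, ω.z)

/-- `R_SUM = min{I(U1,U2;Y|V,U), I(V,U,U1,U2;Y) - I(V;S)}`. -/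
def Rsum (p : O9 V U U1 U2 A1 A2 AS AY AZ → ℝ) : ℝ :=
  min (cMI p (fun ω => (ω.u1, ω.u2)) (fun ω => ω.y) (fun ω => (ω.v, ω.u)))
    (MI p (fun ω => (ω.v, ω.u, ω.u1, ω.u2)) (fun ω => ω.y) -
      MI p (fun ω => ω.v) (fun ω => ω.s))

/-- The region `R_{11}`. -/
def regionR11 (p : O9 V U U1 U2 A1 A2 AS AY AZ → ℝ) : Set (ℝ × ℝ) :=
  {R | 0 ≤ R.1 ∧ 0 ≤ R.2 ∧ ∃ r11 r21 : ℝ, 0 ≤ r11 ∧ 0 ≤ r21 ∧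
    r11 + r21 ≤ MI p (fun ω => ω.v) (fun ω => ω.y) -
      MI p (fun ω => ω.v) (fun ω => (ω.u, ω.z)) ∧
    R.1 ≤ min (cMI p (fun ω => ω.u1) (fun ω => ω.y) (fun ω => (ω.v, ω.u, ω.u2)) -
        cMI p (fun ω => ω.u1) (fun ω => ω.z) (fun ω => (ω.s, ω.u)) + r11)
      (cMI p (fun ω => ω.u1) (fun ω => ω.y) (fun ω => (ω.v, ω.u, ω.u2))) ∧
    R.2 ≤ min (cMI p (fun ω => ω.u2) (fun ω => ω.y) (fun ω => (ω.v, ω.u, ω.u1)) -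
        cMI p (fun ω => ω.u2) (fun ω => ω.z) (fun ω => (ω.s, ω.u)) + r21)
      (cMI p (fun ω => ω.u2) (fun ω => ω.y) (fun ω => (ω.v, ω.u, ω.u1))) ∧
    R.1 + R.2 ≤ min (Rsum p -
        cMI p (fun ω => (ω.u1, ω.u2)) (fun ω => ω.z) (fun ω => (ω.s, ω.u)) + r11 + r21)
      (Rsum p)}

/-- The region `R_{12}` (wiretap coding not available at Encoder 1). -/
def regionR12 (p : O9 V U U1 U2 A1 A2 AS AY AZ → ℝ) : Set (ℝ × ℝ) :=
  {R | 0 ≤ R.1 ∧ 0 ≤ R.2 ∧ ∃ r11 r21 : ℝ, 0 ≤ r11 ∧ 0 ≤ r21 ∧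
    r11 + r21 ≤ MI p (fun ω => ω.v) (fun ω => ω.y) -
      MI p (fun ω => ω.v) (fun ω => (ω.z, ω.u, ω.u1)) ∧
    R.1 ≤ min (cMI p (fun ω => ω.u1) (fun ω => ω.y) (fun ω => (ω.v, ω.u, ω.u2))) r11 ∧
    R.2 ≤ min (cMI p (fun ω => ω.u2) (fun ω => ω.y) (fun ω => (ω.v, ω.u, ω.u1)) -
        cMI p (fun ω => ω.u2) (fun ω => ω.z) (fun ω => (ω.s, ω.u, ω.u1)) + r21)
      (cMI p (fun ω => ω.u2) (fun ω => ω.y) (fun ω => (ω.v, ω.u, ω.u1))) ∧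
    R.1 + R.2 ≤ min (min (Rsum p)
        (Rsum p - cMI p (fun ω => ω.u2) (fun ω => ω.z) (fun ω => (ω.s, ω.u, ω.u1)) + r21))
      (cMI p (fun ω => ω.u2) (fun ω => ω.y) (fun ω => (ω.v, ω.u, ω.u1)) -
        cMI p (fun ω => ω.u2) (fun ω => ω.z) (fun ω => (ω.s, ω.u, ω.u1)) + r11 + r21)}

/-- The region `R_{13}` (wiretap coding not available at Encoder 2). -/
def regionR13 (p : O9 V U U1 U2 A1 A2 AS AY AZ → ℝ) : Set (ℝ × ℝ) :=
  {R | 0 ≤ R.1 ∧ 0 ≤ R.2 ∧ ∃ r11 r21 : ℝ, 0 ≤ r11 ∧ 0 ≤ r21 ∧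
    r11 + r21 ≤ MI p (fun ω => ω.v) (fun ω => ω.y) -
      MI p (fun ω => ω.v) (fun ω => (ω.z, ω.u, ω.u2)) ∧
    R.1 ≤ min (cMI p (fun ω => ω.u1) (fun ω => ω.y) (fun ω => (ω.v, ω.u, ω.u2)) -
        cMI p (fun ω => ω.u1) (fun ω => ω.z) (fun ω => (ω.s, ω.u, ω.u2)) + r11)
      (cMI p (fun ω => ω.u1) (fun ω => ω.y) (fun ω => (ω.v, ω.u, ω.u2))) ∧
    R.2 ≤ min (cMI p (fun ω => ω.u2) (fun ω => ω.y) (fun ω => (ω.v, ω.u, ω.u1))) r21 ∧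
    R.1 + R.2 ≤ min (min (Rsum p)
        (Rsum p - cMI p (fun ω => ω.u1) (fun ω => ω.z) (fun ω => (ω.s, ω.u, ω.u2)) + r11))
      (cMI p (fun ω => ω.u1) (fun ω => ω.y) (fun ω => (ω.v, ω.u, ω.u2)) -
        cMI p (fun ω => ω.u1) (fun ω => ω.z) (fun ω => (ω.s, ω.u, ω.u2)) + r11 + r21)}

end AuxR1

/-- The joint law determined by an auxiliary-law datum. -/
def AuxLawR1.joint (L : AuxLawR1 A1 A2 AS AY AZ) (PS : AS → ℝ)
    (W : A1 → A2 → AS → AY × AZ → ℝ) : O9 L.V L.U L.U1 L.U2 A1 A2 AS AY AZ → ℝ :=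
  jointR1 PS W L.PV L.PU L.PU1 L.PU2 L.PX1 L.PX2

/-- The region `R_1` of Theorem 2: the convex hull of the union, over all auxiliary
joint laws, of `R_{11} ∪ R_{12} ∪ R_{13}`. -/
def RegionR1 (PS : AS → ℝ) (W : A1 → A2 → AS → AY × AZ → ℝ) : Set (ℝ × ℝ) :=
  convexHull ℝ {R | ∃ L : AuxLawR1 A1 A2 AS AY AZ,
    R ∈ regionR11 (L.joint PS W) ∪ regionR12 (L.joint PS W) ∪ regionR13 (L.joint PS W)}

section AuxR2
variable {U1 U2 : Type} [Fintype U1] [Fintype U2] [DecidableEq U1] [DecidableEq U2]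

/-- The joint pmf `P_S P_{U1} P_{U2} P_{X1|U1S} P_{X2|U2S} W`. -/
def jointR2 (PS : AS → ℝ) (W : A1 → A2 → AS → AY × AZ → ℝ) (PU1 : U1 → ℝ)
    (PU2 : U2 → ℝ) (PX1 : U1 → AS → A1 → ℝ) (PX2 : U2 → AS → A2 → ℝ) :
    O7 U1 U2 A1 A2 AS AY AZ → ℝ :=
  fun ω => PS ω.s * PU1 ω.u1 * PU2 ω.u2 * PX1 ω.u1 ω.s ω.x1 * PX2 ω.u2 ω.s ω.x2 *
    W ω.x1 ω.x2 ω.s (ω.y, ω.z)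

/-- The region `R_{21}`. -/
def regionR21 (p : O7 U1 U2 A1 A2 AS AY AZ → ℝ) : Set (ℝ × ℝ) :=
  {R | 0 ≤ R.1 ∧ 0 ≤ R.2 ∧ ∃ r11 r12 r21 r22 : ℝ,
    0 ≤ r11 ∧ 0 ≤ r12 ∧ 0 ≤ r21 ∧ 0 ≤ r22 ∧
    r11 + r12 + r21 + r22 ≤ Hc p (fun ω => ω.s) (fun ω => ω.z) ∧
    Hc p (fun ω => ω.s) (fun ω => (ω.y, ω.u1, ω.u2)) ≤ r12 + r22 ∧
    R.1 ≤ min (cMI p (fun ω => ω.u1) (fun ω => ω.y) (fun ω => ω.u2) -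
        cMI p (fun ω => ω.u1) (fun ω => ω.z) (fun ω => ω.s) + r11)
      (cMI p (fun ω => ω.u1) (fun ω => ω.y) (fun ω => ω.u2) - r12) ∧
    R.2 ≤ min (cMI p (fun ω => ω.u2) (fun ω => ω.y) (fun ω => ω.u1) -
        cMI p (fun ω => ω.u2) (fun ω => ω.z) (fun ω => ω.s) + r21)
      (cMI p (fun ω => ω.u2) (fun ω => ω.y) (fun ω => ω.u1) - r22) ∧
    R.1 + R.2 ≤ min (MI p (fun ω => (ω.u1, ω.u2)) (fun ω => ω.y) -
        cMI p (fun ω => (ω.u1, ω.u2)) (fun ω => ω.z) (fun ω => ω.s) +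
        Hc p (fun ω => ω.s) (fun ω => ω.z) -
        Hc p (fun ω => ω.s) (fun ω => (ω.u1, ω.u2, ω.y)))
      (MI p (fun ω => (ω.u1, ω.u2)) (fun ω => ω.y) -
        Hc p (fun ω => ω.s) (fun ω => (ω.u1, ω.u2, ω.y)))}

/-- The region `R_{22}` (wiretap coding not available at Encoder 1). -/
def regionR22 (p : O7 U1 U2 A1 A2 AS AY AZ → ℝ) : Set (ℝ × ℝ) :=
  {R | 0 ≤ R.1 ∧ 0 ≤ R.2 ∧ ∃ r11 r12 r21 r22 : ℝ,
    0 ≤ r11 ∧ 0 ≤ r12 ∧ 0 ≤ r21 ∧ 0 ≤ r22 ∧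
    r11 + r12 + r21 + r22 ≤ Hc p (fun ω => ω.s) (fun ω => (ω.z, ω.u1)) ∧
    Hc p (fun ω => ω.s) (fun ω => (ω.y, ω.u1, ω.u2)) ≤ r12 + r22 ∧
    R.1 ≤ min r11 (cMI p (fun ω => ω.u1) (fun ω => ω.y) (fun ω => ω.u2) - r12) ∧
    R.2 ≤ min (cMI p (fun ω => ω.u2) (fun ω => ω.y) (fun ω => ω.u1) -
        cMI p (fun ω => ω.u2) (fun ω => ω.z) (fun ω => (ω.s, ω.u1)) + r21)
      (cMI p (fun ω => ω.u2) (fun ω => ω.y) (fun ω => ω.u1) - r22) ∧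
    R.1 + R.2 ≤ min (cMI p (fun ω => ω.u2) (fun ω => ω.y) (fun ω => ω.u1) -
        cMI p (fun ω => ω.u2) (fun ω => ω.z) (fun ω => (ω.s, ω.u1)) +
        Hc p (fun ω => ω.s) (fun ω => (ω.z, ω.u1)) -
        Hc p (fun ω => ω.s) (fun ω => (ω.u1, ω.u2, ω.y)))
      (MI p (fun ω => (ω.u1, ω.u2)) (fun ω => ω.y) -
        Hc p (fun ω => ω.s) (fun ω => (ω.u1, ω.u2, ω.y)))}

/-- The region `R_{23}` (wiretap coding not available at Encoder 2). -/
def regionR23 (p : O7 U1 U2 A1 A2 AS AY AZ → ℝ) : Set (ℝ × ℝ) :=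
  {R | 0 ≤ R.1 ∧ 0 ≤ R.2 ∧ ∃ r11 r12 r21 r22 : ℝ,
    0 ≤ r11 ∧ 0 ≤ r12 ∧ 0 ≤ r21 ∧ 0 ≤ r22 ∧
    r11 + r12 + r21 + r22 ≤ Hc p (fun ω => ω.s) (fun ω => (ω.z, ω.u2)) ∧
    Hc p (fun ω => ω.s) (fun ω => (ω.y, ω.u1, ω.u2)) ≤ r12 + r22 ∧
    R.1 ≤ min (cMI p (fun ω => ω.u1) (fun ω => ω.y) (fun ω => ω.u2) -
        cMI p (fun ω => ω.u1) (fun ω => ω.z) (fun ω => (ω.s, ω.u2)) + r11)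
      (cMI p (fun ω => ω.u1) (fun ω => ω.y) (fun ω => ω.u2) - r12) ∧
    R.2 ≤ min r21 (cMI p (fun ω => ω.u2) (fun ω => ω.y) (fun ω => ω.u1) - r22) ∧
    R.1 + R.2 ≤ min (cMI p (fun ω => ω.u1) (fun ω => ω.y) (fun ω => ω.u2) -
        cMI p (fun ω => ω.u1) (fun ω => ω.z) (fun ω => (ω.s, ω.u2)) +
        Hc p (fun ω => ω.s) (fun ω => (ω.z, ω.u2)) -
        Hc p (fun ω => ω.s) (fun ω => (ω.u1, ω.u2, ω.y)))
      (MI p (fun ω => (ω.u1, ω.u2)) (fun ω => ω.y) -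
        Hc p (fun ω => ω.s) (fun ω => (ω.u1, ω.u2, ω.y)))}

end AuxR2

/-- The joint law determined by an auxiliary-law datum for Coding scheme 2. -/
def AuxLawR2.joint (L : AuxLawR2 A1 A2 AS AY AZ) (PS : AS → ℝ)
    (W : A1 → A2 → AS → AY × AZ → ℝ) : O7 L.U1 L.U2 A1 A2 AS AY AZ → ℝ :=
  jointR2 PS W L.PU1 L.PU2 L.PX1 L.PX2

/-- The region `R_2` of Theorem 2: the convex hull of the union, over all auxiliary
joint laws, of `R_{21} ∪ R_{22} ∪ R_{23}`. -/
def RegionR2 (PS : AS → ℝ) (W : A1 → A2 → AS → AY × AZ → ℝ) : Set (ℝ × ℝ) :=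
  convexHull ℝ {R | ∃ L : AuxLawR2 A1 A2 AS AY AZ,
    R ∈ regionR21 (L.joint PS W) ∪ regionR22 (L.joint PS W) ∪ regionR23 (L.joint PS W)}

/-- The Bernoulli(`p`) state pmf on `Bool` (`true` has probability `p`). -/
def PSp (p : ℝ) : Bool → ℝ := fun s => if s then p else 1 - p

/-- The deterministic channel of Example 1, second model: `Y = X1 ⊕ X2 ⊕ S` and
`Z = X2`. -/
def Wex2 : Bool → Bool → Bool → Bool × Bool → ℝ :=
  fun x1 x2 s yz => if yz.1 = Bool.xor x1 (Bool.xor x2 s) ∧ yz.2 = x2 then 1 else 0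

/-! ### Laws of finite random variables -/

section Law

variable {Ω α β γ κ : Type*} [Fintype Ω] {p : Ω → ℝ}

lemma law_nonneg [DecidableEq α] (hp : ∀ ω, 0 ≤ p ω) (X : Ω → α) (a : α) : 0 ≤ law p X a :=
  Finset.sum_nonneg fun ω _ => by split_ifs <;> simp [hp]

lemma law_apply_pos [DecidableEq α] (hp : ∀ ω, 0 ≤ p ω) (X : Ω → α) {ω : Ω} (h : p ω ≠ 0) :
    0 < law p X (X ω) :=
  Finset.sum_pos' (fun ω' _ => by split_ifs <;> simp [hp])
    ⟨ω, Finset.mem_univ ω, by simpa using (hp ω).lt_of_ne' h⟩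

lemma exists_of_law_ne_zero [DecidableEq α] {X : Ω → α} {a : α} (h : law p X a ≠ 0) :
    ∃ ω, p ω ≠ 0 ∧ X ω = a := by
  obtain ⟨ω, -, hω⟩ := Finset.exists_ne_zero_of_sum_ne_zero h
  exact ⟨ω, (ite_ne_right_iff.1 hω).2, (ite_ne_right_iff.1 hω).1⟩

lemma sum_law_mul [Fintype α] [DecidableEq α] (p : Ω → ℝ) (X : Ω → α) (f : α → ℝ) :
    ∑ a, law p X a * f a = ∑ ω, p ω * f (X ω) := by
  simp only [law, Finset.sum_mul, ite_mul, zero_mul]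
  rw [Finset.sum_comm]
  simp

lemma sum_law [Fintype α] [DecidableEq α] (p : Ω → ℝ) (X : Ω → α) :
    ∑ a, law p X a = ∑ ω, p ω := by
  simpa using sum_law_mul p X fun _ => 1

lemma law_law [Fintype α] [DecidableEq α] [DecidableEq β] (p : Ω → ℝ) (X : Ω → α)
    (g : α → β) : law (law p X) g = law p fun ω => g (X ω) := by
  funext b
  simpa [law] using sum_law_mul p X fun a => if g a = b then 1 else 0

lemma sum_law_prod_fst [Fintype α] [DecidableEq α] [DecidableEq β] (p : Ω → ℝ) (X : Ω → α)
    (Y : Ω → β) (y : β) : ∑ x, law p (fun ω => (X ω, Y ω)) (x, y) = law p Y y := by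
  simp only [law, Prod.mk.injEq, ite_and]
  rw [Finset.sum_comm]
  simp

lemma sum_law_prod_mid [Fintype β] [DecidableEq α] [DecidableEq β] [DecidableEq γ] (p : Ω → ℝ)
    (X : Ω → α) (Y : Ω → β) (Z : Ω → γ) (x : α) (z : γ) :
    ∑ y, law p (fun ω => (X ω, Y ω, Z ω)) (x, y, z) = law p (fun ω => (X ω, Z ω)) (x, z) := by
  rw [← sum_law_prod_fst p Y]
  simp only [law, Prod.mk.injEq, and_left_comm]

lemma law_eq_of_factor [Finite α] [Fintype κ] [DecidableEq α] {X : Ω → α} {T : Ω → κ}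
    (hXT : Function.Bijective fun ω => (X ω, T ω)) {a : α → ℝ} {k : α → κ → ℝ}
    (hk : ∀ x, ∑ t, k x t = 1) (hp : ∀ ω, p ω = a (X ω) * k (X ω) (T ω)) : law p X = a := by
  cases nonempty_fintype α
  funext x
  calc law p X x = ∑ t : α × κ, if t.1 = x then a t.1 * k t.1 t.2 else 0 := by
        simp only [law, hp]
        exact hXT.sum_comp fun t : α × κ => if t.1 = x then a t.1 * k t.1 t.2 else 0
    _ = a x := by
        rw [Fintype.sum_prod_type, Finset.sum_eq_single x (by simp +contextual) (by simp)]
        simp [← Finset.mul_sum, hk]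

end Law

/-! ### Functional dependence -/

section Determines

variable {Ω α β γ : Type*} {p : Ω → ℝ} {X : Ω → α} {Y : Ω → β}

/-- The random variable `Y` is a function of `X` almost surely. On a finite sample space this is
a condition on pairs of points of the support of `p`, and no such function has to be named. -/
def Determines (p : Ω → ℝ) (X : Ω → α) (Y : Ω → β) : Prop :=
  ∀ ⦃ω ω'⦄, p ω ≠ 0 → p ω' ≠ 0 → X ω = X ω' → Y ω = Y ω'

lemma law_apply_congr [Fintype Ω] [DecidableEq α] [DecidableEq β] (hXY : Determines p X Y)
    (hYX : Determines p Y X) {ω : Ω} (hω : p ω ≠ 0) : law p X (X ω) = law p Y (Y ω) := by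
  refine Finset.sum_congr rfl fun ω' _ => ?_
  by_cases hω' : p ω' = 0
  · simp [hω']
  · simp only [show X ω' = X ω ↔ Y ω' = Y ω from ⟨fun h => hXY hω' hω h, fun h => hYX hω' hω h⟩]

lemma Determines.law_apply_le [Fintype Ω] [DecidableEq α] [DecidableEq β] (hp : ∀ ω, 0 ≤ p ω)
    (hXY : Determines p X Y) {ω : Ω} (hω : p ω ≠ 0) : law p X (X ω) ≤ law p Y (Y ω) := by
  refine Finset.sum_le_sum fun ω' _ => ?_
  by_cases hω' : p ω' = 0
  · simp [hω']
  · have := hp ω'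
    have := fun h : X ω' = X ω => hXY hω' hω h
    grind

lemma Determines.mul_logb_law_le [Fintype Ω] [DecidableEq α] [DecidableEq β]
    (hp : ∀ ω, 0 ≤ p ω) (hXY : Determines p X Y) (ω : Ω) :
    p ω * Real.logb 2 (law p X (X ω)) ≤ p ω * Real.logb 2 (law p Y (Y ω)) := by
  by_cases hω : p ω = 0
  · simp [hω]
  · exact mul_le_mul_of_nonneg_left (Real.logb_le_logb_of_le one_lt_two
      (law_apply_pos hp X hω) (hXY.law_apply_le hp hω)) (hp ω)

lemma Determines.of_law_apply_le [Fintype Ω] [DecidableEq α] [DecidableEq β]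
    (hp : ∀ ω, 0 ≤ p ω) (hXY : Determines p X Y)
    (h : ∀ ω, p ω ≠ 0 → law p Y (Y ω) ≤ law p X (X ω)) : Determines p Y X := by
  intro ω ω' hω hω' hY
  by_contra hX
  refine (h ω hω).not_gt (Finset.sum_lt_sum (fun ω₁ _ => ?_) ⟨ω', Finset.mem_univ ω', ?_⟩)
  · by_cases h₁ : p ω₁ = 0
    · simp [h₁]
    · have := hp ω₁
      have := fun h : X ω₁ = X ω => hXY h₁ hω h
      grind
  · simpa [Ne.symm hX, hY] using (hp ω').lt_of_ne' hω'

lemma Determines.symm_of_card_le [Fintype α] [Fintype β] (hXY : Determines p X Y)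
    (hY : ∀ b, ∃ ω, p ω ≠ 0 ∧ Y ω = b) (hcard : Fintype.card α ≤ Fintype.card β) :
    Determines p Y X := by
  choose ω hω hYω using hY
  have hinj : Function.Injective fun b => X (ω b) := fun b b' h => by
    rw [← hYω b, ← hYω b', hXY (hω b) (hω b') h]
  have hsurj : Function.Surjective fun b => X (ω b) :=
    (hinj.bijective_of_nat_card_le (by simpa using hcard)).2
  intro ω₁ ω₂ h₁ h₂ h
  obtain ⟨b₁, hb₁⟩ := hsurj (X ω₁)
  obtain ⟨b₂, hb₂⟩ := hsurj (X ω₂)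
  rw [← hb₁, ← hb₂, ← hYω b₁, ← hYω b₂, hXY (hω b₁) h₁ hb₁, hXY (hω b₂) h₂ hb₂, h]

end Determines

/-! ### Entropy -/

section Entropy

variable {Ω α β : Type*} [Fintype Ω] [Fintype α] [Fintype β] [DecidableEq α] [DecidableEq β]
  {p : Ω → ℝ} {X : Ω → α} {Y : Ω → β}

lemma H_eq_sum (p : Ω → ℝ) (X : Ω → α) :
    H p X = -∑ ω, p ω * Real.logb 2 (law p X (X ω)) := by
  rw [H, ent, sum_law_mul p X fun a => Real.logb 2 (law p X a)]

lemma H_congr (hXY : Determines p X Y) (hYX : Determines p Y X) : H p X = H p Y := by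
  simp only [H_eq_sum]
  refine congrArg Neg.neg (Finset.sum_congr rfl fun ω _ => ?_)
  by_cases hω : p ω = 0
  · simp [hω]
  · rw [law_apply_congr hXY hYX hω]

lemma H_le_of_determines (hp : ∀ ω, 0 ≤ p ω) (hXY : Determines p X Y) : H p Y ≤ H p X := by
  simp only [H_eq_sum, neg_le_neg_iff]
  exact Finset.sum_le_sum fun ω _ => hXY.mul_logb_law_le hp ω

lemma Determines.of_H_le (hp : ∀ ω, 0 ≤ p ω) (hXY : Determines p X Y) (h : H p X ≤ H p Y) :
    Determines p Y X := by
  refine hXY.of_law_apply_le hp fun ω hω => ?_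
  simp only [H_eq_sum, neg_le_neg_iff] at h
  have hterm := (Finset.sum_eq_sum_iff_of_le fun ω _ => hXY.mul_logb_law_le hp ω).1
    ((Finset.sum_le_sum fun ω _ => hXY.mul_logb_law_le hp ω).antisymm h) ω (Finset.mem_univ ω)
  rw [← Real.logb_le_logb one_lt_two (law_apply_pos hp Y hω) (law_apply_pos hp X hω)]
  exact (mul_left_cancel₀ hω hterm).ge

lemma Hc_nonneg (hp : ∀ ω, 0 ≤ p ω) (X : Ω → α) (Y : Ω → β) : 0 ≤ Hc p X Y :=
  sub_nonneg.2 <| H_le_of_determines hp fun _ _ _ _ h => congrArg Prod.snd h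

lemma Hc_eq_zero_of_determines (h : Determines p Y X) : Hc p X Y = 0 :=
  sub_eq_zero.2 <| H_congr (fun _ _ _ _ h => congrArg Prod.snd h)
    fun _ _ hω hω' hY => Prod.ext (h hω hω' hY) hY

lemma determines_of_Hc_nonpos (hp : ∀ ω, 0 ≤ p ω) (h : Hc p X Y ≤ 0) : Determines p Y X :=
  fun _ _ hω hω' hY => congrArg Prod.fst <|
    Determines.of_H_le (X := fun ω => (X ω, Y ω)) hp (fun _ _ _ _ h => congrArg Prod.snd h)
      (sub_nonpos.1 h) hω hω' hY

lemma H_of_subsingleton [Subsingleton α] (hp : ∑ ω, p ω = 1) : H p X = 0 := by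
  have hlaw (ω : Ω) : law p X (X ω) = 1 := by simp [law, Subsingleton.elim _ (X ω), hp]
  simp [H_eq_sum, hlaw]

end Entropy

/-! ### Nonnegativity of mutual information -/

lemma KL_nonneg {α : Type*} [Fintype α] {p q : α → ℝ} (hp : ∀ a, 0 ≤ p a) (hq : ∀ a, 0 ≤ q a)
    (hpq : ∀ a, q a = 0 → p a = 0) (hsum : ∑ a, q a ≤ ∑ a, p a) : 0 ≤ KL p q := by
  have hterm (a : α) : (p a - q a) / Real.log 2 ≤ p a * Real.logb 2 (p a / q a) := by
    obtain hpa | hpa := (hp a).eq_or_lt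
    · simpa [← hpa, neg_div] using div_nonneg (hq a) (Real.log_pos one_lt_two).le
    have hqa : 0 < q a := (hq a).lt_of_ne' (mt (hpq a) hpa.ne')
    rw [Real.logb, ← mul_div_assoc]
    refine div_le_div_of_nonneg_right ?_ (Real.log_pos one_lt_two).le
    calc p a - q a = p a * (1 - (p a / q a)⁻¹) := by field_simp
      _ ≤ p a * Real.log (p a / q a) :=
        mul_le_mul_of_nonneg_left (Real.one_sub_inv_le_log_of_pos (div_pos hpa hqa)) hpa.le
  calc (0 : ℝ) ≤ (∑ a, p a - ∑ a, q a) / Real.log 2 :=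
        div_nonneg (sub_nonneg.2 hsum) (Real.log_pos one_lt_two).le
    _ = ∑ a, (p a - q a) / Real.log 2 := by rw [← Finset.sum_sub_distrib, Finset.sum_div]
    _ ≤ KL p q := Finset.sum_le_sum fun a _ => hterm a

section Nonneg

variable {Ω α β γ : Type*} [Fintype Ω] [Fintype α] [Fintype β] [Fintype γ]
  [DecidableEq α] [DecidableEq β] [DecidableEq γ] {p : Ω → ℝ}

lemma cMI_eq_KL (hp : ∀ ω, 0 ≤ p ω) (X : Ω → α) (Y : Ω → β) (Z : Ω → γ) :
    cMI p X Y Z = KL (law p fun ω => (X ω, Y ω, Z ω)) fun t =>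
      law p (fun ω => (X ω, Z ω)) (t.1, t.2.2) * law p (fun ω => (Y ω, Z ω)) t.2 /
        law p Z t.2.2 := by
  rw [KL, sum_law_mul p (fun ω => (X ω, Y ω, Z ω)) fun t => Real.logb 2
    (law p (fun ω => (X ω, Y ω, Z ω)) t / (law p (fun ω => (X ω, Z ω)) (t.1, t.2.2) *
      law p (fun ω => (Y ω, Z ω)) t.2 / law p Z t.2.2))]
  simp only [cMI, Hc, H_eq_sum, sub_eq_add_neg, neg_add, neg_neg, ← Finset.sum_neg_distrib,
    ← Finset.sum_add_distrib]
  refine Finset.sum_congr rfl fun ω _ => ?_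
  by_cases hω : p ω = 0
  · simp [hω]
  have hXYZ := law_apply_pos hp (fun ω => (X ω, Y ω, Z ω)) hω
  have hXZ := law_apply_pos hp (fun ω => (X ω, Z ω)) hω
  have hYZ := law_apply_pos hp (fun ω => (Y ω, Z ω)) hω
  have hZ := law_apply_pos hp Z hω
  rw [Real.logb_div hXYZ.ne' (by positivity), Real.logb_div (by positivity) hZ.ne',
    Real.logb_mul hXZ.ne' hYZ.ne']
  ring

lemma cMI_nonneg (hp : ∀ ω, 0 ≤ p ω) (X : Ω → α) (Y : Ω → β) (Z : Ω → γ) :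
    0 ≤ cMI p X Y Z := by
  rw [cMI_eq_KL hp]
  refine KL_nonneg (law_nonneg hp _) (fun t => div_nonneg (mul_nonneg (law_nonneg hp _ _)
    (law_nonneg hp _ _)) (law_nonneg hp _ _)) (fun t ht => ?_) ?_
  · contrapose! ht
    obtain ⟨ω, hω, rfl⟩ := exists_of_law_ne_zero ht
    exact (div_pos (mul_pos (law_apply_pos hp (fun ω => (X ω, Z ω)) hω)
      (law_apply_pos hp (fun ω => (Y ω, Z ω)) hω)) (law_apply_pos hp Z hω)).ne'
  · calc _ = ∑ t : β × γ, law p (fun ω => (Y ω, Z ω)) t * (law p Z t.2 / law p Z t.2) := by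
          rw [Fintype.sum_prod_type, Finset.sum_comm]
          refine Finset.sum_congr rfl fun t _ => ?_
          simp only [← Finset.sum_div, ← Finset.sum_mul, sum_law_prod_fst]
          ring
      _ ≤ ∑ t : β × γ, law p (fun ω => (Y ω, Z ω)) t := Finset.sum_le_sum fun t _ =>
          mul_le_of_le_one_right (law_nonneg hp _ t) (div_self_le_one _)
      _ = ∑ t, law p (fun ω => (X ω, Y ω, Z ω)) t := by rw [sum_law, sum_law]

lemma MI_eq_cMI_unit (hp : ∑ ω, p ω = 1) (X : Ω → α) (Y : Ω → β) :
    MI p X Y = cMI p X Y fun _ => () := by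
  have hX : H p X = H p fun ω => (X ω, ()) :=
    H_congr (by grind [Determines]) (by grind [Determines])
  have hY : H p Y = H p fun ω => (Y ω, ()) :=
    H_congr (by grind [Determines]) (by grind [Determines])
  have hXY : (H p fun ω => (X ω, Y ω)) = H p fun ω => (X ω, Y ω, ()) :=
    H_congr (by grind [Determines]) (by grind [Determines])
  rw [MI, cMI, Hc, Hc, H_of_subsingleton (X := fun _ => ()) hp, hX, hY, hXY]
  ring

lemma MI_nonneg (hp : IsPmf p) (X : Ω → α) (Y : Ω → β) : 0 ≤ MI p X Y :=
  (cMI_nonneg hp.1 X Y _).trans_eq (MI_eq_cMI_unit hp.2 X Y).symm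

end Nonneg

/-! ### Conditional mutual information and conditional independence -/

section CondIndep

variable {Ω α α' β β' γ γ' δ : Type*} [Fintype Ω] [Fintype α] [Fintype α'] [Fintype β]
  [Fintype β'] [Fintype γ] [Fintype γ'] [Fintype δ] [DecidableEq α] [DecidableEq α']
  [DecidableEq β] [DecidableEq β'] [DecidableEq γ] [DecidableEq γ'] [DecidableEq δ]
  {p : Ω → ℝ} {X : Ω → α} {X' : Ω → α'} {Y : Ω → β} {Y' : Ω → β'} {Z : Ω → γ} {Z' : Ω → γ'}
  {W : Ω → δ}

lemma cMI_comm (p : Ω → ℝ) (X : Ω → α) (Y : Ω → β) (Z : Ω → γ) :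
    cMI p X Y Z = cMI p Y X Z := by
  have h : H p (fun ω => (X ω, Y ω, Z ω)) = H p fun ω => (Y ω, X ω, Z ω) :=
    H_congr (by grind [Determines]) (by grind [Determines])
  simp only [cMI, Hc, h]
  ring

lemma cMI_congr_cond (hZ : Determines p Z Z') (hZ' : Determines p Z' Z) :
    cMI p X Y Z = cMI p X Y Z' := by
  have h₀ : H p Z = H p Z' := H_congr hZ hZ'
  have hX : H p (fun ω => (X ω, Z ω)) = H p fun ω => (X ω, Z' ω) :=
    H_congr (by grind [Determines]) (by grind [Determines])
  have hY : H p (fun ω => (Y ω, Z ω)) = H p fun ω => (Y ω, Z' ω) :=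
    H_congr (by grind [Determines]) (by grind [Determines])
  have hXY : H p (fun ω => (X ω, Y ω, Z ω)) = H p fun ω => (X ω, Y ω, Z' ω) :=
    H_congr (by grind [Determines]) (by grind [Determines])
  simp only [cMI, Hc, h₀, hX, hY, hXY]

lemma cMI_prod_right (p : Ω → ℝ) (X : Ω → α) (Y : Ω → β) (W : Ω → δ) (Z : Ω → γ) :
    cMI p X (fun ω => (Y ω, W ω)) Z = cMI p X W Z + cMI p X Y fun ω => (W ω, Z ω) := by
  have hYW : H p (fun ω => ((Y ω, W ω), Z ω)) = H p fun ω => (Y ω, W ω, Z ω) :=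
    H_congr (by grind [Determines]) (by grind [Determines])
  have hXYW : H p (fun ω => (X ω, (Y ω, W ω), Z ω)) = H p fun ω => (X ω, Y ω, W ω, Z ω) :=
    H_congr (by grind [Determines]) (by grind [Determines])
  simp only [cMI, Hc, hYW, hXYW]
  ring

lemma cMI_prod_right_of_determines (h : Determines p (fun ω => (Y ω, Z ω)) W) :
    cMI p X (fun ω => (Y ω, W ω)) Z = cMI p X Y Z := by
  have hY : H p (fun ω => ((Y ω, W ω), Z ω)) = H p fun ω => (Y ω, Z ω) :=
    H_congr (by grind [Determines]) (by grind [Determines])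
  have hXY : H p (fun ω => (X ω, (Y ω, W ω), Z ω)) = H p fun ω => (X ω, Y ω, Z ω) :=
    H_congr (by grind [Determines]) (by grind [Determines])
  simp only [cMI, Hc, hY, hXY]

lemma cMI_eq_zero_of_determines (h : Determines p Z Y) : cMI p X Y Z = 0 := by
  have hY : H p (fun ω => (Y ω, Z ω)) = H p Z :=
    H_congr (by grind [Determines]) (by grind [Determines])
  have hXY : H p (fun ω => (X ω, Y ω, Z ω)) = H p fun ω => (X ω, Z ω) :=
    H_congr (by grind [Determines]) (by grind [Determines])
  simp only [cMI, Hc, hY, hXY, sub_self]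

lemma MI_add_cMI_comm (p : Ω → ℝ) (X : Ω → α) (Y : Ω → β) (Z : Ω → γ) :
    MI p X Y + cMI p X Z Y = MI p X Z + cMI p X Y Z := by
  have hYZ : H p (fun ω => (Z ω, Y ω)) = H p fun ω => (Y ω, Z ω) :=
    H_congr (by grind [Determines]) (by grind [Determines])
  have hXYZ : H p (fun ω => (X ω, Z ω, Y ω)) = H p fun ω => (X ω, Y ω, Z ω) :=
    H_congr (by grind [Determines]) (by grind [Determines])
  simp only [MI, cMI, Hc, hYZ, hXYZ]
  ring

lemma MI_eq_H_sub_Hc (p : Ω → ℝ) (X : Ω → α) (Y : Ω → β) : MI p X Y = H p Y - Hc p Y X := by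
  have h : H p (fun ω => (X ω, Y ω)) = H p fun ω => (Y ω, X ω) :=
    H_congr (by grind [Determines]) (by grind [Determines])
  simp only [MI, Hc, h]
  ring

lemma cMI_le_of_determines (hp : ∀ ω, 0 ≤ p ω) (h : Determines p (fun ω => (Y ω, Z ω)) Y') :
    cMI p X Y' Z ≤ cMI p X Y Z := by
  rw [← cMI_prod_right_of_determines h, cMI_prod_right]
  exact le_add_of_nonneg_right (cMI_nonneg hp _ _ _)

/-- The random variables `X` and `Y` are conditionally independent given `Z`, encoded through
the vanishing of `I(X;Y|Z)`. -/
def CondIndep (p : Ω → ℝ) (X : Ω → α) (Y : Ω → β) (Z : Ω → γ) : Prop :=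
  cMI p X Y Z = 0

lemma CondIndep.symm (h : CondIndep p X Y Z) : CondIndep p Y X Z :=
  (cMI_comm p Y X Z).trans h

lemma CondIndep.mono_right (hp : ∀ ω, 0 ≤ p ω) (h : CondIndep p X Y Z)
    (hY : Determines p (fun ω => (Y ω, Z ω)) Y') : CondIndep p X Y' Z :=
  ((cMI_le_of_determines hp hY).trans_eq h).antisymm (cMI_nonneg hp _ _ _)

lemma CondIndep.weak_union (hp : ∀ ω, 0 ≤ p ω) (h : CondIndep p X (fun ω => (Y ω, W ω)) Z) :
    CondIndep p X Y fun ω => (W ω, Z ω) :=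
  (add_eq_zero_iff_of_nonneg (cMI_nonneg hp X W Z) (cMI_nonneg hp X Y _)).1
    ((cMI_prod_right p X Y W Z).symm.trans h) |>.2

lemma CondIndep.of_determines (hp : ∀ ω, 0 ≤ p ω) (h : CondIndep p X Y Z)
    (hX : Determines p (fun ω => (X ω, Z ω)) X') (hY : Determines p (fun ω => (Y ω, Z ω)) Y')
    (hZ' : Determines p (fun ω => (Y ω, Z ω)) Z') (hZ : Determines p Z' Z) :
    CondIndep p X' Y' Z' := by
  have h' : CondIndep p X' (fun ω => (Y ω, Z' ω)) Z :=
    (h.symm.mono_right hp hX).symm.mono_right hp (by grind [Determines])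
  rw [CondIndep, ← cMI_congr_cond (Z := fun ω => (Z' ω, Z ω)) (by grind [Determines])
    (by grind [Determines])]
  exact (h'.weak_union hp).mono_right hp (by grind [Determines])

lemma CondIndep.cMI_le_cMI_cond (hp : ∀ ω, 0 ≤ p ω) (h : CondIndep p X W Z) (Y : Ω → β) :
    cMI p X Y Z ≤ cMI p X Y fun ω => (W ω, Z ω) :=
  calc cMI p X Y Z ≤ cMI p X (fun ω => (Y ω, W ω)) Z :=
        cMI_le_of_determines hp (by grind [Determines])
    _ = cMI p X Y fun ω => (W ω, Z ω) := by rw [cMI_prod_right, h, zero_add]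

lemma CondIndep.cMI_cond_le_cMI (hp : ∀ ω, 0 ≤ p ω)
    (h : CondIndep p Y W fun ω => (X ω, Z ω)) :
    cMI p X Y (fun ω => (W ω, Z ω)) ≤ cMI p X Y Z :=
  calc cMI p X Y (fun ω => (W ω, Z ω)) = cMI p Y X fun ω => (W ω, Z ω) := cMI_comm _ _ _ _
    _ ≤ cMI p Y W Z + cMI p Y X fun ω => (W ω, Z ω) :=
        le_add_of_nonneg_left (cMI_nonneg hp _ _ _)
    _ = cMI p Y (fun ω => (X ω, W ω)) Z := (cMI_prod_right _ _ _ _ _).symm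
    _ ≤ cMI p Y (fun ω => (W ω, X ω)) Z := cMI_le_of_determines hp (by grind [Determines])
    _ = cMI p X Y Z := by rw [cMI_prod_right, h, add_zero, cMI_comm]

end CondIndep

section Factor

variable {Ω α β γ κ : Type*} [Fintype Ω] [Fintype α] [Fintype β] [Fintype γ] [Fintype κ]
  [DecidableEq α] [DecidableEq β] [DecidableEq γ] {p : Ω → ℝ} {X : Ω → α} {Y : Ω → β}
  {Z : Ω → γ} {T : Ω → κ}

lemma condIndep_of_law_eq_mul (hp : ∀ ω, 0 ≤ p ω) {a : α → γ → ℝ} {b : β → γ → ℝ}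
    (h : ∀ x y z, law p (fun ω => (X ω, Y ω, Z ω)) (x, y, z) = a x z * b y z) :
    CondIndep p X Y Z := by
  have hXZ (x : α) (z : γ) : law p (fun ω => (X ω, Z ω)) (x, z) = a x z * ∑ y, b y z := by
    simp only [← sum_law_prod_mid p X Y Z, h, Finset.mul_sum]
  have hYZ (y : β) (z : γ) : law p (fun ω => (Y ω, Z ω)) (y, z) = (∑ x, a x z) * b y z := by
    simp only [← sum_law_prod_fst p X (fun ω => (Y ω, Z ω)), h, Finset.sum_mul]
  have hZ (z : γ) : law p Z z = (∑ x, a x z) * ∑ y, b y z := by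
    simp only [← sum_law_prod_fst p X Z, hXZ, Finset.sum_mul]
  rw [CondIndep, cMI_eq_KL hp, KL]
  refine Finset.sum_eq_zero fun ⟨x, y, z⟩ _ => ?_
  by_cases hxyz : a x z * b y z = 0
  · simp [h, hxyz]
  obtain ⟨ω, hω, hωt⟩ := exists_of_law_ne_zero ((h x y z).trans_ne hxyz)
  have hAB : (∑ x, a x z) * ∑ y, b y z ≠ 0 := by
    rw [← hZ, ← (Prod.mk.inj (Prod.mk.inj hωt).2).2]
    exact (law_apply_pos hp Z hω).ne'
  have hq : a x z * (∑ y, b y z) * ((∑ x, a x z) * b y z) /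
      ((∑ x, a x z) * ∑ y, b y z) = a x z * b y z := by
    field_simp [left_ne_zero_of_mul hAB, right_ne_zero_of_mul hAB]
  simp only [h, hXZ, hYZ, hZ, hq, div_self hxyz, Real.logb_one, mul_zero]

lemma condIndep_of_factor (hp : ∀ ω, 0 ≤ p ω)
    (hT : Function.Bijective fun ω => ((X ω, Y ω, Z ω), T ω)) {a : α → γ → ℝ}
    {b : β → γ → ℝ} {k : α × β × γ → κ → ℝ} (hk : ∀ t, ∑ i, k t i = 1)
    (h : ∀ ω, p ω = a (X ω) (Z ω) * b (Y ω) (Z ω) * k (X ω, Y ω, Z ω) (T ω)) :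
    CondIndep p X Y Z :=
  condIndep_of_law_eq_mul hp fun x y z =>
    congrFun (law_eq_of_factor (a := fun t => a t.1 t.2.2 * b t.2.1 t.2.2) hT hk h) (x, y, z)

end Factor

/-! ### Entropy of particular laws -/

section Ent

variable {α β : Type*} [Fintype α] [Fintype β]

lemma IsPmf.le_one {p : α → ℝ} (hp : IsPmf p) (a : α) : p a ≤ 1 :=
  hp.2 ▸ Finset.single_le_sum (fun b _ => hp.1 b) (Finset.mem_univ a)

lemma IsPmf.sum_prod {p : α × β → ℝ} (hp : IsPmf p) : ∑ a, ∑ b, p (a, b) = 1 := by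
  rw [← Fintype.sum_prod_type, hp.2]

lemma ent_nonneg {p : α → ℝ} (hp : IsPmf p) : 0 ≤ ent p := by
  rw [ent, ← Finset.sum_neg_distrib]
  exact Finset.sum_nonneg fun a _ => neg_nonneg.2 <| mul_nonpos_of_nonneg_of_nonpos (hp.1 a)
    (Real.logb_nonpos one_lt_two (hp.1 a) (hp.le_one a))

lemma ent_pos [Nontrivial α] {p : α → ℝ} (hp : IsPmf p) (h : ∀ a, p a ≠ 0) : 0 < ent p := by
  have hpos (a : α) : 0 < p a := (hp.1 a).lt_of_ne' (h a)
  have hlt (a : α) : p a < 1 := by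
    obtain ⟨b, hb⟩ := exists_ne a
    exact hp.2 ▸ Finset.single_lt_sum hb (Finset.mem_univ a) (Finset.mem_univ b) (hpos b)
      fun c _ _ => hp.1 c
  rw [ent, ← Finset.sum_neg_distrib]
  exact Finset.sum_pos (fun a _ => neg_pos.2 <| mul_neg_of_pos_of_neg (hpos a)
    (Real.logb_neg one_lt_two (hpos a) (hlt a))) Finset.univ_nonempty

lemma isPmf_uniform [Nonempty α] : IsPmf fun _ : α => (Fintype.card α : ℝ)⁻¹ :=
  ⟨fun _ => by positivity, by simp⟩

lemma isPmf_single [DecidableEq α] (a : α) : IsPmf (Pi.single a (1 : ℝ)) :=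
  ⟨fun b => by by_cases h : b = a <;> simp [h], by simp⟩

lemma ent_uniform [Nonempty α] :
    ent (fun _ : α => (Fintype.card α : ℝ)⁻¹) = Real.logb 2 (Fintype.card α) := by
  simp [ent]

lemma ent_mul {p : α → ℝ} {q : β → ℝ} (hp : ∑ a, p a = 1) (hq : ∑ b, q b = 1) :
    ent (fun t : α × β => p t.1 * q t.2) = ent p + ent q := by
  have hlog (a : α) (b : β) : p a * q b * Real.logb 2 (p a * q b) =
      q b * (p a * Real.logb 2 (p a)) + p a * (q b * Real.logb 2 (q b)) := by
    by_cases ha : p a = 0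
    · simp [ha]
    by_cases hb : q b = 0
    · simp [hb]
    rw [Real.logb_mul ha hb]
    ring
  simp only [ent, Fintype.sum_prod_type, hlog, Finset.sum_add_distrib, ← Finset.sum_mul,
    ← Finset.mul_sum, hp, hq]
  ring

end Ent

/-! ### Coding scheme 1 -/

namespace AuxLawR1

variable {𝒳₁ 𝒳₂ 𝒮 𝒴 𝒵 : Type} [Fintype 𝒳₁] [Fintype 𝒳₂] [Fintype 𝒮] [Fintype 𝒴] [Fintype 𝒵]
  {PS : 𝒮 → ℝ} {W : 𝒳₁ → 𝒳₂ → 𝒮 → 𝒴 × 𝒵 → ℝ} (L : AuxLawR1 𝒳₁ 𝒳₂ 𝒮 𝒴 𝒵)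

lemma joint_apply (ω : O9 L.V L.U L.U1 L.U2 𝒳₁ 𝒳₂ 𝒮 𝒴 𝒵) :
    L.joint PS W ω = PS ω.s * L.PV ω.s ω.v * L.PU ω.u * L.PU1 ω.u ω.u1 * L.PU2 ω.u ω.u2 *
      L.PX1 ω.u ω.u1 ω.s ω.x1 * L.PX2 ω.u ω.u2 ω.s ω.x2 * W ω.x1 ω.x2 ω.s (ω.y, ω.z) :=
  rfl

lemma joint_nonneg (hPS : ∀ s, 0 ≤ PS s) (hW : ∀ x₁ x₂ s, IsPmf (W x₁ x₂ s))
    (ω : O9 L.V L.U L.U1 L.U2 𝒳₁ 𝒳₂ 𝒮 𝒴 𝒵) : 0 ≤ L.joint PS W ω := by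
  have h₁ := hPS ω.s
  have h₂ := (L.hPV ω.s).1 ω.v
  have h₃ := L.hPU.1 ω.u
  have h₄ := (L.hPU1 ω.u).1 ω.u1
  have h₅ := (L.hPU2 ω.u).1 ω.u2
  have h₆ := (L.hPX1 ω.u ω.u1 ω.s).1 ω.x1
  have h₇ := (L.hPX2 ω.u ω.u2 ω.s).1 ω.x2
  have h₈ := (hW ω.x1 ω.x2 ω.s).1 (ω.y, ω.z)
  rw [joint_apply]
  positivity

lemma law_s_joint [DecidableEq 𝒮] (hW : ∀ x₁ x₂ s, IsPmf (W x₁ x₂ s)) :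
    law (L.joint PS W) (fun ω => ω.s) = PS := by
  refine law_eq_of_factor (T := fun ω => (ω.v, ω.u, ω.u1, ω.u2, ω.x1, ω.x2, ω.y, ω.z))
    (Function.bijective_iff_has_inverse.2
      ⟨fun (s, v, u, u₁, u₂, x₁, x₂, y, z) => (v, u, u₁, u₂, x₁, x₂, s, y, z),
        fun _ => rfl, fun _ => rfl⟩)
    (k := fun s (v, u, u₁, u₂, x₁, x₂, yz) => L.PV s v * (L.PU u * (L.PU1 u u₁ *
      (L.PU2 u u₂ * (L.PX1 u u₁ s x₁ * (L.PX2 u u₂ s x₂ * W x₁ x₂ s yz))))))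
    (fun s => ?_) fun ω => by rw [joint_apply]; ring
  simp only [Fintype.sum_prod_type, ← Finset.mul_sum, (hW _ _ _).sum_prod, (L.hPX2 _ _ _).2,
    (L.hPX1 _ _ _).2, (L.hPU2 _).2, (L.hPU1 _).2, L.hPU.2, (L.hPV _).2, mul_one]

lemma isPmf_joint (hPS : IsPmf PS) (hW : ∀ x₁ x₂ s, IsPmf (W x₁ x₂ s)) :
    IsPmf (L.joint PS W) := by
  classical
  exact ⟨L.joint_nonneg hPS.1 hW, by rw [← sum_law _ fun ω => ω.s, L.law_s_joint hW, hPS.2]⟩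

lemma condIndep_u1x1_u2x2 [DecidableEq 𝒳₁] [DecidableEq 𝒳₂] [DecidableEq 𝒮]
    (hPS : ∀ s, 0 ≤ PS s) (hW : ∀ x₁ x₂ s, IsPmf (W x₁ x₂ s)) :
    CondIndep (L.joint PS W) (fun ω => (ω.u1, ω.x1)) (fun ω => (ω.u2, ω.x2))
      fun ω => (ω.s, ω.u) := by
  refine condIndep_of_factor (T := fun ω => (ω.v, ω.y, ω.z)) (L.joint_nonneg hPS hW)
    (Function.bijective_iff_has_inverse.2
      ⟨fun (((u₁, x₁), (u₂, x₂), s, u), v, y, z) => (v, u, u₁, u₂, x₁, x₂, s, y, z),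
        fun _ => rfl, fun _ => rfl⟩)
    (a := fun (u₁, x₁) (s, u) => PS s * L.PU u * L.PU1 u u₁ * L.PX1 u u₁ s x₁)
    (b := fun (u₂, x₂) (s, u) => L.PU2 u u₂ * L.PX2 u u₂ s x₂)
    (k := fun ((_, x₁), (_, x₂), s, _) (v, yz) => L.PV s v * W x₁ x₂ s yz)
    (fun _ => ?_) fun ω => by rw [joint_apply]; ring
  simp only [Fintype.sum_prod_type, ← Finset.mul_sum, (hW _ _ _).sum_prod, (L.hPV _).2, mul_one]

lemma condIndep_u2_svu1 [DecidableEq 𝒮] (hPS : ∀ s, 0 ≤ PS s)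
    (hW : ∀ x₁ x₂ s, IsPmf (W x₁ x₂ s)) :
    CondIndep (L.joint PS W) (fun ω => ω.u2) (fun ω => (ω.s, ω.v, ω.u1)) fun ω => ω.u := by
  refine condIndep_of_factor (T := fun ω => (ω.x1, ω.x2, ω.y, ω.z)) (L.joint_nonneg hPS hW)
    (Function.bijective_iff_has_inverse.2
      ⟨fun ((u₂, (s, v, u₁), u), x₁, x₂, y, z) => (v, u, u₁, u₂, x₁, x₂, s, y, z),
        fun _ => rfl, fun _ => rfl⟩)
    (a := fun u₂ u => L.PU2 u u₂)
    (b := fun (s, v, u₁) u => PS s * L.PV s v * L.PU u * L.PU1 u u₁)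
    (k := fun (u₂, (s, _, u₁), u) (x₁, x₂, yz) =>
      L.PX1 u u₁ s x₁ * (L.PX2 u u₂ s x₂ * W x₁ x₂ s yz))
    (fun _ => ?_) fun ω => by rw [joint_apply]; ring
  simp only [Fintype.sum_prod_type, ← Finset.mul_sum, (hW _ _ _).sum_prod, (L.hPX2 _ _ _).2,
    (L.hPX1 _ _ _).2, mul_one]

lemma cMI_u2_z_su_le [DecidableEq 𝒮] [DecidableEq 𝒵] (hPS : ∀ s, 0 ≤ PS s)
    (hW : ∀ x₁ x₂ s, IsPmf (W x₁ x₂ s)) :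
    cMI (L.joint PS W) (fun ω => ω.u2) (fun ω => ω.z) (fun ω => (ω.s, ω.u)) ≤
      cMI (L.joint PS W) (fun ω => ω.u2) (fun ω => ω.z) fun ω => (ω.s, ω.u, ω.u1) := by
  have hp := L.joint_nonneg hPS hW
  have hindep : CondIndep (L.joint PS W) (fun ω => ω.u2) (fun ω => ω.u1)
      fun ω => (ω.s, ω.u) :=
    (L.condIndep_u2_svu1 hPS hW).of_determines hp (by grind [Determines])
      (by grind [Determines]) (by grind [Determines]) (by grind [Determines])
  exact (hindep.cMI_le_cMI_cond hp _).trans_eq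
    (cMI_congr_cond (by grind [Determines]) (by grind [Determines]))

set_option synthInstance.maxSize 256 in
lemma condIndep_v_uu1u2y [DecidableEq 𝒮] [DecidableEq 𝒴] (hPS : ∀ s, 0 ≤ PS s)
    (hW : ∀ x₁ x₂ s, IsPmf (W x₁ x₂ s)) :
    CondIndep (L.joint PS W) (fun ω => ω.v) (fun ω => (ω.u, ω.u1, ω.u2, ω.y))
      fun ω => ω.s := by
  classical
  have h : CondIndep (L.joint PS W) (fun ω => ω.v)
      (fun ω => (ω.u, ω.u1, ω.u2, ω.x1, ω.x2, ω.y, ω.z)) fun ω => ω.s := by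
    refine condIndep_of_factor (T := fun _ => ()) (L.joint_nonneg hPS hW)
      (Function.bijective_iff_has_inverse.2
        ⟨fun ((v, (u, u₁, u₂, x₁, x₂, y, z), s), _) => (v, u, u₁, u₂, x₁, x₂, s, y, z),
          fun _ => rfl, fun _ => rfl⟩)
      (a := fun v s => PS s * L.PV s v)
      (b := fun (u, u₁, u₂, x₁, x₂, yz) s => L.PU u * L.PU1 u u₁ * L.PU2 u u₂ *
        L.PX1 u u₁ s x₁ * L.PX2 u u₂ s x₂ * W x₁ x₂ s yz)
      (k := fun _ _ => 1) (fun _ => by simp) fun ω => by rw [joint_apply]; ring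
  exact h.mono_right (L.joint_nonneg hPS hW) (by grind [Determines])

lemma H_s_joint [DecidableEq 𝒮] (hW : ∀ x₁ x₂ s, IsPmf (W x₁ x₂ s)) :
    H (L.joint PS W) (fun ω => ω.s) = ent PS := by
  rw [H, L.law_s_joint hW]

section Channel

variable [DecidableEq 𝒴]

lemma cMI_u2_y_vuu1_le [DecidableEq 𝒮] (hPS : ∀ s, 0 ≤ PS s) (hW : ∀ x₁ x₂ s, IsPmf (W x₁ x₂ s)) :
    cMI (L.joint PS W) (fun ω => ω.u2) (fun ω => ω.y) (fun ω => (ω.v, ω.u, ω.u1)) ≤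
      cMI (L.joint PS W) (fun ω => ω.u2) (fun ω => ω.y) (fun ω => (ω.s, ω.u, ω.u1)) := by
  have hp := L.joint_nonneg hPS hW
  have hs : CondIndep (L.joint PS W) (fun ω => ω.u2) (fun ω => ω.s)
      fun ω => (ω.v, ω.u, ω.u1) :=
    (L.condIndep_u2_svu1 hPS hW).of_determines hp (by grind [Determines])
      (by grind [Determines]) (by grind [Determines]) (by grind [Determines])
  have hv : CondIndep (L.joint PS W) (fun ω => ω.v) (fun ω => ω.y)
      fun ω => (ω.u2, ω.s, ω.u, ω.u1) :=
    (L.condIndep_v_uu1u2y hPS hW).of_determines hp (by grind [Determines])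
      (by grind [Determines]) (by grind [Determines]) (by grind [Determines])
  calc _ ≤ cMI (L.joint PS W) (fun ω => ω.u2) (fun ω => ω.y)
            (fun ω => (ω.s, ω.v, ω.u, ω.u1)) := hs.cMI_le_cMI_cond hp _
    _ = cMI (L.joint PS W) (fun ω => ω.u2) (fun ω => ω.y) (fun ω => (ω.v, ω.s, ω.u, ω.u1)) :=
        cMI_congr_cond (by grind [Determines]) (by grind [Determines])
    _ ≤ _ := hv.symm.cMI_cond_le_cMI hp

lemma condIndep_v_y_s [DecidableEq 𝒮] (hPS : ∀ s, 0 ≤ PS s) (hW : ∀ x₁ x₂ s, IsPmf (W x₁ x₂ s)) :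
    CondIndep (L.joint PS W) (fun ω => ω.v) (fun ω => ω.y) fun ω => ω.s :=
  (L.condIndep_v_uu1u2y hPS hW).mono_right (L.joint_nonneg hPS hW) (by grind [Determines])

lemma MI_v_y_add_cMI [DecidableEq 𝒮] (hPS : ∀ s, 0 ≤ PS s) (hW : ∀ x₁ x₂ s, IsPmf (W x₁ x₂ s)) :
    MI (L.joint PS W) (fun ω => ω.v) (fun ω => ω.y) +
        cMI (L.joint PS W) (fun ω => ω.v) (fun ω => ω.s) (fun ω => ω.y) +
        Hc (L.joint PS W) (fun ω => ω.s) (fun ω => ω.v) = ent PS := by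
  rw [MI_add_cMI_comm, L.condIndep_v_y_s hPS hW, MI_eq_H_sub_Hc, L.H_s_joint hW]
  ring

lemma MI_v_y_le_ent (hPS : ∀ s, 0 ≤ PS s) (hW : ∀ x₁ x₂ s, IsPmf (W x₁ x₂ s)) :
    MI (L.joint PS W) (fun ω => ω.v) (fun ω => ω.y) ≤ ent PS := by
  classical
  have hp := L.joint_nonneg hPS hW
  linarith [L.MI_v_y_add_cMI hPS hW, Hc_nonneg hp (fun ω => ω.s) fun ω => ω.v,
    cMI_nonneg hp (fun ω => ω.v) (fun ω => ω.s) fun ω => ω.y]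

/- Equality forces `H(S|V) = 0` and `I(V;S|Y) = 0`, hence `H(S|Y) = 0`; as `Y` takes no more
values than `S`, it is then a function of `S`, and so of `V`. -/
lemma cMI_u2_y_vuu1_eq_zero (hPS : ∀ s, 0 ≤ PS s) (hPS' : ∀ s, PS s ≠ 0)
    (hW : ∀ x₁ x₂ s, IsPmf (W x₁ x₂ s)) (hcard : Fintype.card 𝒴 ≤ Fintype.card 𝒮)
    (h : ent PS ≤ MI (L.joint PS W) (fun ω => ω.v) (fun ω => ω.y)) :
    cMI (L.joint PS W) (fun ω => ω.u2) (fun ω => ω.y) (fun ω => (ω.v, ω.u, ω.u1)) = 0 := by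
  classical
  have hp := L.joint_nonneg hPS hW
  have hsum := L.MI_v_y_add_cMI hPS hW
  have hHc := Hc_nonneg hp (fun ω => ω.s) fun ω => ω.v
  have hcMI := cMI_nonneg hp (fun ω => ω.v) (fun ω => ω.s) fun ω => ω.y
  have hvs : Determines (L.joint PS W) (fun ω => ω.v) (fun ω => ω.s) :=
    determines_of_Hc_nonpos hp (by linarith)
  have hys : Determines (L.joint PS W) (fun ω => ω.y) (fun ω => ω.s) := by
    have hvys : Hc (L.joint PS W) (fun ω => ω.s) (fun ω => (ω.v, ω.y)) = 0 :=
      Hc_eq_zero_of_determines (by grind [Determines])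
    refine determines_of_Hc_nonpos hp ?_
    rw [cMI_comm, cMI, hvys] at hcMI hsum
    linarith
  have hsy : Determines (L.joint PS W) (fun ω => ω.s) (fun ω => ω.y) :=
    hys.symm_of_card_le (fun s => exists_of_law_ne_zero <|
      (congrFun (L.law_s_joint hW) s).trans_ne (hPS' s)) hcard
  exact cMI_eq_zero_of_determines (by grind [Determines])

end Channel

end AuxLawR1

/-! ### Channels revealing the second input to the eavesdropper -/

section TapChannel

variable {𝒳₁ 𝒳₂ 𝒮 𝒴 : Type}

/-- The deterministic state-dependent wiretap channel with legitimate output `Y = f(X₁, X₂, S)`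
and eavesdropper output `Z = X₂`. -/
def tapChannel [DecidableEq 𝒳₂] [DecidableEq 𝒴] (f : 𝒳₁ → 𝒳₂ → 𝒮 → 𝒴) :
    𝒳₁ → 𝒳₂ → 𝒮 → 𝒴 × 𝒳₂ → ℝ :=
  fun x₁ x₂ s yz => if yz.1 = f x₁ x₂ s ∧ yz.2 = x₂ then 1 else 0

variable [Fintype 𝒳₂] [Fintype 𝒴] [DecidableEq 𝒳₂] [DecidableEq 𝒴] {f : 𝒳₁ → 𝒳₂ → 𝒮 → 𝒴}

lemma isPmf_tapChannel (x₁ : 𝒳₁) (x₂ : 𝒳₂) (s : 𝒮) : IsPmf (tapChannel f x₁ x₂ s) := by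
  convert! isPmf_single (f x₁ x₂ s, x₂) using 1
  ext yz
  simp [tapChannel, Pi.single_apply, Prod.ext_iff]

variable [Fintype 𝒳₁] [Fintype 𝒮] {PS : 𝒮 → ℝ} (L : AuxLawR1 𝒳₁ 𝒳₂ 𝒮 𝒴 𝒳₂)

lemma eq_of_joint_tapChannel_ne_zero {ω : O9 L.V L.U L.U1 L.U2 𝒳₁ 𝒳₂ 𝒮 𝒴 𝒳₂}
    (h : L.joint PS (tapChannel f) ω ≠ 0) : ω.y = f ω.x1 ω.x2 ω.s ∧ ω.z = ω.x2 :=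
  (ite_ne_right_iff.1 (right_ne_zero_of_mul (L.joint_apply ω ▸ h))).1

variable [DecidableEq 𝒮]

lemma cMI_u2_y_le_cMI_u2_z (hPS : ∀ s, 0 ≤ PS s) :
    cMI (L.joint PS (tapChannel f)) (fun ω => ω.u2) (fun ω => ω.y) (fun ω => (ω.s, ω.u, ω.u1)) ≤
      cMI (L.joint PS (tapChannel f)) (fun ω => ω.u2) (fun ω => ω.z) fun ω => (ω.s, ω.u) := by
  classical
  have hp := L.joint_nonneg hPS (isPmf_tapChannel (f := f))
  have hω ω := eq_of_joint_tapChannel_ne_zero (PS := PS) (f := f) L (ω := ω)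
  have hindep : CondIndep (L.joint PS (tapChannel f)) (fun ω => ω.u2) (fun ω => (ω.u1, ω.x1))
      fun ω => (ω.z, ω.s, ω.u) :=
    ((L.condIndep_u1x1_u2x2 hPS isPmf_tapChannel).of_determines hp (by grind [Determines])
      (by grind [Determines]) (by grind [Determines]) (by grind [Determines])).symm
  have hu1 : cMI (L.joint PS (tapChannel f)) (fun ω => ω.u2) (fun ω => ω.y)
        (fun ω => (ω.s, ω.u, ω.u1)) =
      cMI (L.joint PS (tapChannel f)) (fun ω => ω.u2) (fun ω => ω.y)
        fun ω => (ω.u1, ω.s, ω.u) :=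
    cMI_congr_cond (by grind [Determines]) (by grind [Determines])
  calc _ ≤ cMI (L.joint PS (tapChannel f)) (fun ω => ω.u2) (fun ω => (ω.y, ω.u1))
          (fun ω => (ω.s, ω.u)) := by
        rw [hu1, cMI_prod_right]
        exact le_add_of_nonneg_left (cMI_nonneg hp _ _ _)
    _ ≤ cMI (L.joint PS (tapChannel f)) (fun ω => ω.u2) (fun ω => ((ω.u1, ω.x1), ω.z))
          (fun ω => (ω.s, ω.u)) := cMI_le_of_determines hp (by grind [Determines])
    _ = _ := by rw [cMI_prod_right, hindep, add_zero]

lemma snd_le_MI_and_le_cMI_of_mem_regions (hPS : IsPmf PS) {R : ℝ × ℝ}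
    (hR : R ∈ regionR11 (L.joint PS (tapChannel f)) ∪ regionR12 (L.joint PS (tapChannel f)) ∪
      regionR13 (L.joint PS (tapChannel f))) :
    R.2 ≤ MI (L.joint PS (tapChannel f)) (fun ω => ω.v) (fun ω => ω.y) ∧
      R.2 ≤ cMI (L.joint PS (tapChannel f)) (fun ω => ω.u2) (fun ω => ω.y)
        fun ω => (ω.v, ω.u, ω.u1) := by
  have hp := L.isPmf_joint hPS (isPmf_tapChannel (f := f))
  have hV := L.cMI_u2_y_vuu1_le hPS.1 (isPmf_tapChannel (f := f))
  have hS := cMI_u2_y_le_cMI_u2_z (f := f) L hPS.1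
  have hZ := L.cMI_u2_z_su_le hPS.1 (isPmf_tapChannel (f := f))
  rcases hR with (⟨-, -, r₁, r₂, hr₁, -, hr, -, hR, -⟩ |
    ⟨-, -, r₁, r₂, hr₁, -, hr, -, hR, -⟩) | ⟨-, -, r₁, r₂, hr₁, -, hr, -, hR, -⟩ <;>
  obtain ⟨hR, hR'⟩ := le_min_iff.1 hR
  · exact ⟨by linarith [MI_nonneg hp (fun ω => ω.v) fun ω => (ω.u, ω.z)], hR'⟩
  · exact ⟨by linarith [MI_nonneg hp (fun ω => ω.v) fun ω => (ω.z, ω.u, ω.u1)], hR'⟩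
  · exact ⟨by linarith [MI_nonneg hp (fun ω => ω.v) fun ω => (ω.z, ω.u, ω.u2)], hR⟩

lemma snd_lt_ent_of_mem_regionR1 [Nontrivial 𝒮] (hPS : IsPmf PS) (hPS' : ∀ s, PS s ≠ 0)
    (hcard : Fintype.card 𝒴 ≤ Fintype.card 𝒮) {R : ℝ × ℝ}
    (hR : R ∈ RegionR1 PS (tapChannel f)) : R.2 < ent PS := by
  refine convexHull_min (t := {R : ℝ × ℝ | R.2 < ent PS}) ?_
    (convex_halfSpace_lt (LinearMap.snd ℝ ℝ ℝ).isLinear _) hR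
  rintro R ⟨L, hR⟩
  change R.2 < ent PS
  obtain ⟨hMI, hcMI⟩ := snd_le_MI_and_le_cMI_of_mem_regions L hPS hR
  by_contra! hent
  have hzero := L.cMI_u2_y_vuu1_eq_zero hPS.1 hPS' isPmf_tapChannel hcard (hent.trans hMI)
  exact (ent_pos hPS hPS').not_ge (hent.trans (hcMI.trans_eq hzero))

end TapChannel

/-! ### Coding scheme 2 -/

lemma ent_law_uniform_mul {α β γ : Type*} [Fintype α] [Fintype β] [Fintype γ] [Nonempty α]
    [DecidableEq γ] {q : β → ℝ} (hq : ∑ b, q b = 1) {g : α → β → γ}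
    (hg : ∀ b, Function.Bijective fun a => g a b) :
    ent (law (fun t : α × β => (Fintype.card α : ℝ)⁻¹ * q t.2) fun t => g t.1 t.2) =
      Real.logb 2 (Fintype.card α) := by
  obtain ⟨b, -⟩ := Finset.exists_ne_zero_of_sum_ne_zero (hq.trans_ne one_ne_zero)
  have : Nonempty γ := ⟨g (Classical.arbitrary α) b⟩
  have hlaw : law (fun t : α × β => (Fintype.card α : ℝ)⁻¹ * q t.2) (fun t => g t.1 t.2) =
      fun _ => (Fintype.card γ : ℝ)⁻¹ := by
    funext c
    simp only [law, Fintype.sum_prod_type_right]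
    calc _ = ∑ b, ∑ c', if c' = c then (Fintype.card α : ℝ)⁻¹ * q b else 0 :=
          Finset.sum_congr rfl fun b _ => (hg b).sum_comp fun c' =>
            if c' = c then (Fintype.card α : ℝ)⁻¹ * q b else 0
      _ = (Fintype.card γ : ℝ)⁻¹ := by
          simp [← Finset.mul_sum, hq, Fintype.card_of_bijective (hg b)]
  rw [hlaw, ent_uniform, Fintype.card_of_bijective (hg b)]

section KeyScheme

variable {𝒳₁ 𝒳₂ 𝒮 𝒴 : Type} [Fintype 𝒳₂] [DecidableEq 𝒳₁] [DecidableEq 𝒳₂] [DecidableEq 𝒴]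

/-- The joint law of Coding scheme 2 in which the first sender is silent (it always transmits
`x₀`, and `U₁` is trivial) and the second sends a uniform symbol `X₂ = U₂`, so that secrecy rests
on the key extracted from the state alone. -/
def keyJoint (PS : 𝒮 → ℝ) (f : 𝒳₁ → 𝒳₂ → 𝒮 → 𝒴) (x₀ : 𝒳₁) :
    O7 Unit 𝒳₂ 𝒳₁ 𝒳₂ 𝒮 𝒴 𝒳₂ → ℝ :=
  jointR2 PS (tapChannel f) (fun _ => 1) (fun _ => (Fintype.card 𝒳₂ : ℝ)⁻¹)
    (fun _ _ => Pi.single x₀ 1) fun u₂ _ => Pi.single u₂ 1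

variable {PS : 𝒮 → ℝ} {f : 𝒳₁ → 𝒳₂ → 𝒮 → 𝒴} {x₀ : 𝒳₁}

lemma eq_of_keyJoint_ne_zero {ω : O7 Unit 𝒳₂ 𝒳₁ 𝒳₂ 𝒮 𝒴 𝒳₂} (h : keyJoint PS f x₀ ω ≠ 0) :
    ω.y = f x₀ ω.u2 ω.s ∧ ω.z = ω.u2 := by
  have hx₁ : ω.x1 = x₀ := by
    by_contra hne
    simp [keyJoint, jointR2, hne] at h
  have hx₂ : ω.x2 = ω.u2 := by
    by_contra hne
    simp [keyJoint, jointR2, hne] at h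
  rw [← hx₁, ← hx₂]
  exact (ite_ne_right_iff.1 (right_ne_zero_of_mul h)).1

variable [Fintype 𝒳₁] [Fintype 𝒮] [Fintype 𝒴]

lemma law_u2s_keyJoint [DecidableEq 𝒮] :
    law (keyJoint PS f x₀) (fun ω => (ω.u2, ω.s)) =
      fun t => (Fintype.card 𝒳₂ : ℝ)⁻¹ * PS t.2 := by
  refine law_eq_of_factor (T := fun ω => (ω.u1, ω.x1, ω.x2, ω.y, ω.z))
    (Function.bijective_iff_has_inverse.2
      ⟨fun ((u₂, s), u₁, x₁, x₂, y, z) => (u₁, u₂, x₁, x₂, s, y, z),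
        fun _ => rfl, fun _ => rfl⟩)
    (k := fun (u₂, s) (_, x₁, x₂, yz) => (Pi.single x₀ (1 : ℝ) : 𝒳₁ → ℝ) x₁ *
      ((Pi.single u₂ (1 : ℝ) : 𝒳₂ → ℝ) x₂ * tapChannel f x₁ x₂ s yz))
    (fun t => ?_) fun ω => by rw [keyJoint, jointR2]; ring
  simp only [Fintype.sum_prod_type, ← Finset.mul_sum, (isPmf_tapChannel _ _ _).sum_prod,
    (isPmf_single _).2, mul_one, Finset.univ_unique, Finset.sum_singleton]

variable [Nonempty 𝒳₂]

lemma sum_keyJoint (hPS : ∑ s, PS s = 1) : ∑ ω, keyJoint PS f x₀ ω = 1 := by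
  classical
  rw [← sum_law _ fun ω => (ω.u2, ω.s), law_u2s_keyJoint]
  simp [Fintype.sum_prod_type, ← Finset.mul_sum, hPS]

lemma H_u2s_keyJoint [DecidableEq 𝒮] (hPS : ∑ s, PS s = 1) :
    H (keyJoint PS f x₀) (fun ω => (ω.u2, ω.s)) =
      Real.logb 2 (Fintype.card 𝒳₂) + ent PS := by
  rw [H, law_u2s_keyJoint, ent_mul isPmf_uniform.2 hPS, ent_uniform]

lemma H_comp_u2s_keyJoint {α : Type*} [Fintype α] [DecidableEq α] (hPS : ∑ s, PS s = 1)
    {g : 𝒳₂ → 𝒮 → α} (hg : ∀ s, Function.Bijective fun x₂ => g x₂ s) :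
    H (keyJoint PS f x₀) (fun ω => g ω.u2 ω.s) = Real.logb 2 (Fintype.card 𝒳₂) := by
  classical
  rw [← ent_law_uniform_mul hPS hg, H, ← law_u2s_keyJoint (f := f) (x₀ := x₀), law_law]

lemma MI_u2_y_keyJoint (hPS : ∑ s, PS s = 1)
    (hf : ∀ s, Function.Bijective fun x₂ => f x₀ x₂ s)
    (hf' : ∀ x₂, Function.Injective (f x₀ x₂)) :
    MI (keyJoint PS f x₀) (fun ω => ω.u2) (fun ω => ω.y) =
      Real.logb 2 (Fintype.card 𝒳₂) - ent PS := by
  classical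
  have hω ω := eq_of_keyJoint_ne_zero (PS := PS) (f := f) (x₀ := x₀) (ω := ω)
  have hu₂ : H (keyJoint PS f x₀) (fun ω => ω.u2) = Real.logb 2 (Fintype.card 𝒳₂) :=
    H_comp_u2s_keyJoint hPS fun _ => Function.bijective_id
  have hy : H (keyJoint PS f x₀) (fun ω => ω.y) = Real.logb 2 (Fintype.card 𝒳₂) := by
    rw [← H_comp_u2s_keyJoint (f := f) (x₀ := x₀) hPS hf]
    exact H_congr (by grind [Determines]) (by grind [Determines])
  have hu₂y : H (keyJoint PS f x₀) (fun ω => (ω.u2, ω.y)) =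
      H (keyJoint PS f x₀) fun ω => (ω.u2, ω.s) :=
    H_congr (by grind [Determines, Function.Injective]) (by grind [Determines])
  rw [MI, hu₂, hy, hu₂y, H_u2s_keyJoint hPS]
  ring

lemma MI_u1u2_y_keyJoint (hPS : ∑ s, PS s = 1)
    (hf : ∀ s, Function.Bijective fun x₂ => f x₀ x₂ s)
    (hf' : ∀ x₂, Function.Injective (f x₀ x₂)) :
    MI (keyJoint PS f x₀) (fun ω => (ω.u1, ω.u2)) (fun ω => ω.y) =
      Real.logb 2 (Fintype.card 𝒳₂) - ent PS := by
  have hu : H (keyJoint PS f x₀) (fun ω => (ω.u1, ω.u2)) = H (keyJoint PS f x₀) fun ω => ω.u2 :=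
    H_congr (by grind [Determines]) (by grind [Determines])
  have huy : H (keyJoint PS f x₀) (fun ω => ((ω.u1, ω.u2), ω.y)) =
      H (keyJoint PS f x₀) fun ω => (ω.u2, ω.y) :=
    H_congr (by grind [Determines]) (by grind [Determines])
  rw [← MI_u2_y_keyJoint hPS hf hf', MI, MI, hu, huy]

lemma Hc_s_zu2_keyJoint [DecidableEq 𝒮] (hPS : ∑ s, PS s = 1) :
    Hc (keyJoint PS f x₀) (fun ω => ω.s) (fun ω => (ω.z, ω.u2)) = ent PS := by
  have hω ω := eq_of_keyJoint_ne_zero (PS := PS) (f := f) (x₀ := x₀) (ω := ω)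
  have hszu₂ : H (keyJoint PS f x₀) (fun ω => (ω.s, ω.z, ω.u2)) =
      H (keyJoint PS f x₀) fun ω => (ω.u2, ω.s) :=
    H_congr (by grind [Determines]) (by grind [Determines])
  have hzu₂ : H (keyJoint PS f x₀) (fun ω => (ω.z, ω.u2)) = Real.logb 2 (Fintype.card 𝒳₂) := by
    rw [← H_comp_u2s_keyJoint (f := f) (x₀ := x₀) hPS (g := fun x₂ _ => x₂)
      fun _ => Function.bijective_id]
    exact H_congr (by grind [Determines]) (by grind [Determines])
  rw [Hc, hszu₂, hzu₂, H_u2s_keyJoint hPS, add_sub_cancel_left]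

lemma mem_regionR23_keyJoint [DecidableEq 𝒮] (hPS : IsPmf PS)
    (hf : ∀ s, Function.Bijective fun x₂ => f x₀ x₂ s)
    (hf' : ∀ x₂, Function.Injective (f x₀ x₂))
    (h : ent PS ≤ Real.logb 2 (Fintype.card 𝒳₂) - ent PS) :
    ((0 : ℝ), ent PS) ∈ regionR23 (keyJoint PS f x₀) := by
  have hω ω := eq_of_keyJoint_ne_zero (PS := PS) (f := f) (x₀ := x₀) (ω := ω)
  have hkey := Hc_s_zu2_keyJoint (f := f) (x₀ := x₀) hPS.2
  have hdec : Hc (keyJoint PS f x₀) (fun ω => ω.s) (fun ω => (ω.y, ω.u1, ω.u2)) = 0 :=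
    Hc_eq_zero_of_determines (by grind [Determines, Function.Injective])
  have hdec' : Hc (keyJoint PS f x₀) (fun ω => ω.s) (fun ω => (ω.u1, ω.u2, ω.y)) = 0 :=
    Hc_eq_zero_of_determines (by grind [Determines, Function.Injective])
  have hu₁y : cMI (keyJoint PS f x₀) (fun ω => ω.u1) (fun ω => ω.y) (fun ω => ω.u2) = 0 :=
    (cMI_comm _ _ _ _).trans (cMI_eq_zero_of_determines fun _ _ _ _ _ => rfl)
  have hu₁z : cMI (keyJoint PS f x₀) (fun ω => ω.u1) (fun ω => ω.z)
      (fun ω => (ω.s, ω.u2)) = 0 :=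
    (cMI_comm _ _ _ _).trans (cMI_eq_zero_of_determines fun _ _ _ _ _ => rfl)
  have hu₂y : cMI (keyJoint PS f x₀) (fun ω => ω.u2) (fun ω => ω.y) (fun ω => ω.u1) =
      Real.logb 2 (Fintype.card 𝒳₂) - ent PS :=
    (MI_eq_cMI_unit (sum_keyJoint hPS.2) _ _).symm.trans (MI_u2_y_keyJoint hPS.2 hf hf')
  have hu₁u₂y := MI_u1u2_y_keyJoint hPS.2 hf hf'
  refine ⟨le_rfl, ent_nonneg hPS, 0, 0, ent PS, 0, le_rfl, le_rfl, ent_nonneg hPS, le_rfl, ?_⟩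
  simp [hkey, hdec, hdec', hu₁y, hu₁z, hu₂y, hu₁u₂y, h]

end KeyScheme

lemma mem_regionR2_tapChannel {𝒳₁ 𝒳₂ 𝒮 𝒴 : Type} [Fintype 𝒳₁] [Fintype 𝒳₂] [Fintype 𝒮]
    [Fintype 𝒴] [DecidableEq 𝒳₂] [DecidableEq 𝒮] [DecidableEq 𝒴] [Nonempty 𝒳₂] {PS : 𝒮 → ℝ}
    {f : 𝒳₁ → 𝒳₂ → 𝒮 → 𝒴} {x₀ : 𝒳₁} (hPS : IsPmf PS)
    (hf : ∀ s, Function.Bijective fun x₂ => f x₀ x₂ s)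
    (hf' : ∀ x₂, Function.Injective (f x₀ x₂))
    (h : ent PS ≤ Real.logb 2 (Fintype.card 𝒳₂) - ent PS) :
    ((0 : ℝ), ent PS) ∈ RegionR2 PS (tapChannel f) := by
  classical
  exact subset_convexHull ℝ _
    ⟨{ U1 := Unit
       U2 := 𝒳₂
       PU1 := fun _ => 1
       PU2 := fun _ => (Fintype.card 𝒳₂ : ℝ)⁻¹
       PX1 := fun _ _ => Pi.single x₀ 1
       PX2 := fun u₂ _ => Pi.single u₂ 1
       hPU1 := ⟨fun _ => zero_le_one, by simp⟩
       hPU2 := isPmf_uniform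
       hPX1 := fun _ _ => isPmf_single x₀
       hPX2 := fun u₂ _ => isPmf_single u₂ },
      Or.inr (mem_regionR23_keyJoint hPS hf hf' h)⟩

/-! ### Example 1 -/

theorem example1_second_channel_general {𝒳₁ 𝒳₂ 𝒮 𝒴 : Type} [Fintype 𝒳₁] [Fintype 𝒳₂]
    [Fintype 𝒮] [Fintype 𝒴] [DecidableEq 𝒳₂] [DecidableEq 𝒮] [DecidableEq 𝒴]
    [Nonempty 𝒳₂] [Nontrivial 𝒮] {PS : 𝒮 → ℝ} (hPS : IsPmf PS) (hPS' : ∀ s, PS s ≠ 0)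
    {f : 𝒳₁ → 𝒳₂ → 𝒮 → 𝒴} {x₀ : 𝒳₁} (hf : ∀ s, Function.Bijective fun x₂ => f x₀ x₂ s)
    (hf' : ∀ x₂, Function.Bijective (f x₀ x₂)) :
    (ent PS ≤ Real.logb 2 (Fintype.card 𝒳₂) - ent PS →
      ((0 : ℝ), ent PS) ∈ RegionR2 PS (tapChannel f)) ∧
    (∀ L : AuxLawR1 𝒳₁ 𝒳₂ 𝒮 𝒴 𝒳₂,
      cMI (L.joint PS (tapChannel f)) (fun ω => ω.u2) (fun ω => ω.y)
          (fun ω => (ω.s, ω.u, ω.u1)) ≤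
        cMI (L.joint PS (tapChannel f)) (fun ω => ω.u2) (fun ω => ω.z)
          (fun ω => (ω.s, ω.u)) ∧
      cMI (L.joint PS (tapChannel f)) (fun ω => ω.u2) (fun ω => ω.y)
          (fun ω => (ω.v, ω.u, ω.u1)) ≤
        cMI (L.joint PS (tapChannel f)) (fun ω => ω.u2) (fun ω => ω.y)
          (fun ω => (ω.s, ω.u, ω.u1)) ∧
      MI (L.joint PS (tapChannel f)) (fun ω => ω.v) (fun ω => ω.y) ≤ ent PS) ∧
    (∀ R2 : ℝ, ((0 : ℝ), R2) ∈ RegionR1 PS (tapChannel f) → R2 < ent PS) :=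
  ⟨mem_regionR2_tapChannel hPS hf fun x₂ => (hf' x₂).injective,
    fun L => ⟨cMI_u2_y_le_cMI_u2_z L hPS.1, L.cMI_u2_y_vuu1_le hPS.1 isPmf_tapChannel,
      L.MI_v_y_le_ent hPS.1 isPmf_tapChannel⟩,
    fun _ hR => snd_lt_ent_of_mem_regionR1 hPS hPS'
      (Fintype.card_of_bijective (hf' (Classical.arbitrary 𝒳₂))).ge hR⟩

lemma Wex2_eq_tapChannel : Wex2 = tapChannel fun x₁ x₂ s => x₁ ^^ (x₂ ^^ s) := rfl

lemma isPmf_PSp {p : ℝ} (hp0 : 0 ≤ p) (hp1 : p ≤ 1) : IsPmf (PSp p) :=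
  ⟨Bool.forall_bool.2 ⟨sub_nonneg.2 hp1, hp0⟩, by simp [PSp]⟩

lemma ent_PSp (p : ℝ) : ent (PSp p) = hb p := by
  simp only [ent, hb, PSp, Fintype.sum_bool, if_true, Bool.false_eq_true, if_false]
  ring

/-- **Example 1, second channel (Coding scheme 2 beats Coding scheme 1).**
If `1 - h(p) ≥ h(p)`, the rate pair `(0, h(p))` lies in `R_2`; for every admissible
joint law of Coding scheme 1 one has
`I(U2;Y|V,U,U1) ≤ I(U2;Y|S,U,U1) ≤ I(U2;Z|S,U)` and `I(V;Y) ≤ h(p)`; and every point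
`(0, R2)` of `R_1` satisfies `R2 < h(p)` (so `(0, h(p)) ∉ R_1`). -/
theorem example1_second_channel (p : ℝ) (hp0 : 0 < p) (hp1 : p < 1) :
    (hb p ≤ 1 - hb p → ((0 : ℝ), hb p) ∈ RegionR2 (PSp p) Wex2) ∧
    (∀ L : AuxLawR1 Bool Bool Bool Bool Bool,
      cMI (L.joint (PSp p) Wex2) (fun ω => ω.u2) (fun ω => ω.y)
          (fun ω => (ω.s, ω.u, ω.u1)) ≤
        cMI (L.joint (PSp p) Wex2) (fun ω => ω.u2) (fun ω => ω.z)
          (fun ω => (ω.s, ω.u)) ∧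
      cMI (L.joint (PSp p) Wex2) (fun ω => ω.u2) (fun ω => ω.y)
          (fun ω => (ω.v, ω.u, ω.u1)) ≤
        cMI (L.joint (PSp p) Wex2) (fun ω => ω.u2) (fun ω => ω.y)
          (fun ω => (ω.s, ω.u, ω.u1)) ∧
      MI (L.joint (PSp p) Wex2) (fun ω => ω.v) (fun ω => ω.y) ≤ hb p) ∧
    (∀ R2 : ℝ, ((0 : ℝ), R2) ∈ RegionR1 (PSp p) Wex2 → R2 < hb p) := by
  have hPS' : ∀ s, PSp p s ≠ 0 := Bool.forall_bool.2 ⟨(sub_pos.2 hp1).ne', hp0.ne'⟩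
  simpa [ent_PSp, Wex2_eq_tapChannel] using
    example1_second_channel_general (isPmf_PSp hp0.le hp1.le) hPS'
      (f := fun x₁ x₂ s => x₁ ^^ (x₂ ^^ s)) (x₀ := false) (by decide) (by decide)

end Paper
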